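/- (Frobenius-type completeness theorem) Assume A₀, A₁, A₂, A₃ are real analytic on a connected and simply connected open U ⊆ ℝ². For K ≥ 0 let ℱ_K be the matrix-valued function on U whose rows are the symmetrised iterated derivatives D_{(a₁}⋯D_{a_j)}V for 0 ≤ j ≤ K (so ℱ_K has 1 + 2 + ⋯ + (K+1) rows and 6 columns), and assume each ℱ_K has constant rank on U. If K₀ is the smallest natural number with rank ℱ_{K₀} = rank ℱ_{K₀+1}, then rank ℱ_{K₀+k} = rank ℱ_{K₀} for all k ∈ ℕ, and the set of solutions Ψ : U → ℝ⁶ of the linear system ∂ₓΨ + Ω₁Ψ = 0, ∂_yΨ + Ω₂Ψ = 0 is a real vector space of dimension 6 − rank ℱ_{K₀}. -/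

import Mathlib

/-!
The matrices `Ω₁, Ω₂` define a connection on the trivial bundle with fibre `ℝ⁶`, and the solutions
of the linear system are its parallel sections. A direct computation shows that the curvature
matrix has only one nonzero row, the last one, which is `V`. Hence a parallel section is annihilated
by `V` and, differentiating the pairing, by all iterated derivatives of `V`.

The commutator of the operators `D_a` is a multiple of `V`, so reordering derivatives changes them
only by terms of lower order, and the symmetrised derivatives have the same span as all iterated
derivatives. When the rank is constant and does not grow from order `K₀` to `K₀ + 1`, this span has
local smooth frames and is stable under `D`, so it never grows again.

Consider the annihilator of the stable span, of rank `6 - rank ℱ_{K₀}`. The pairings of a frame of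
the span with a solution of the transport equation along a line satisfy a homogeneous linear
equation, so transport along lines preserves the annihilator. The curvature vanishes on the
annihilator because `V` is in the span. Therefore the sections obtained by transporting a vector of
the annihilator along the radii of a small ball are parallel. On the simply connected set `U` these
local sections extend to global ones by lifting the identity to a covering space. Since a parallel
section is determined by its value at one point, evaluation at a point identifies the space of
solutions with the annihilator at that point.
-/

noncomputable section

open Matrix

/-- Partial derivative in the first (x) variable. -/
def pdx (f : ℝ × ℝ → ℝ) : ℝ × ℝ → ℝ :=
  fun p => deriv (fun t => f (t, p.2)) p.1

/-- Partial derivative in the second (y) variable. -/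
def pdy (f : ℝ × ℝ → ℝ) : ℝ × ℝ → ℝ :=
  fun p => deriv (fun t => f (p.1, t)) p.2

/-- `pd 0 = ∂ₓ`, `pd 1 = ∂_y`. -/
def pd : Fin 2 → (ℝ × ℝ → ℝ) → (ℝ × ℝ → ℝ) := ![pdx, pdy]

/-- The Liouville linear system associated to `(A0, A1, A2, A3)`, holding on `U`. -/
def LiouvilleSystem (U : Set (ℝ × ℝ)) (A0 A1 A2 A3 ψ1 ψ2 ψ3 : ℝ × ℝ → ℝ) : Prop :=
  ∀ p ∈ U,
    pdx ψ1 p = (2/3) * A1 p * ψ1 p - 2 * A0 p * ψ2 p ∧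
    pdy ψ3 p = 2 * A3 p * ψ2 p - (2/3) * A2 p * ψ3 p ∧
    pdy ψ1 p + 2 * pdx ψ2 p
      = (4/3) * A2 p * ψ1 p - (2/3) * A1 p * ψ2 p - 2 * A0 p * ψ3 p ∧
    pdx ψ3 p + 2 * pdy ψ2 p
      = 2 * A3 p * ψ1 p - (4/3) * A1 p * ψ3 p + (2/3) * A2 p * ψ2 p

/-- `(A0, A1, A2, A3)` is metrisable near `p` (within `U`). -/
def MetrisableNear (U : Set (ℝ × ℝ)) (A0 A1 A2 A3 : ℝ × ℝ → ℝ) (p : ℝ × ℝ) : Prop :=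
  ∃ V : Set (ℝ × ℝ), IsOpen V ∧ p ∈ V ∧ V ⊆ U ∧
    ∃ E F G : ℝ × ℝ → ℝ,
      ContDiffOn ℝ (⊤ : ℕ∞) E V ∧ ContDiffOn ℝ (⊤ : ℕ∞) F V ∧ ContDiffOn ℝ (⊤ : ℕ∞) G V ∧
      (∀ q ∈ V, E q * G q - (F q) ^ 2 ≠ 0) ∧
      (∀ q ∈ V,
        A0 q = (E q * pdy E q - 2 * E q * pdx F q + F q * pdx E q)
                 / (2 * (E q * G q - (F q) ^ 2)) ∧
        A1 q = (3 * F q * pdy E q + G q * pdx E q - 2 * F q * pdx F q - 2 * E q * pdx G q)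
                 / (2 * (E q * G q - (F q) ^ 2)) ∧
        A2 q = (2 * F q * pdy F q + 2 * G q * pdy E q - 3 * F q * pdx G q - E q * pdy G q)
                 / (2 * (E q * G q - (F q) ^ 2)) ∧
        A3 q = (2 * G q * pdy F q - G q * pdx G q - F q * pdy G q)
                 / (2 * (E q * G q - (F q) ^ 2)))

end

noncomputable section

/-- Liouville's first projective invariant `L₁`. -/
def Lio1 (A0 A1 A2 A3 : ℝ × ℝ → ℝ) : ℝ × ℝ → ℝ := fun p =>
  (2/3) * pdx (pdy A1) p - (1/3) * pdx (pdx A2) p - pdy (pdy A0) p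
    + A0 p * pdy A2 p + A2 p * pdy A0 p - A3 p * pdx A0 p - 2 * A0 p * pdx A3 p
    - (2/3) * A1 p * pdy A1 p + (1/3) * A1 p * pdx A2 p

/-- Liouville's second projective invariant `L₂`. -/
def Lio2 (A0 A1 A2 A3 : ℝ × ℝ → ℝ) : ℝ × ℝ → ℝ := fun p =>
  (2/3) * pdx (pdy A2) p - (1/3) * pdy (pdy A1) p - pdx (pdx A3) p
    - A3 p * pdx A1 p - A1 p * pdx A3 p + A0 p * pdy A3 p + 2 * A3 p * pdy A0 p
    + (2/3) * A2 p * pdx A2 p - (1/3) * A2 p * pdy A1 p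

/-- The row vector `V = (V₁,…,V₆)`. -/
def Vrow (A0 A1 A2 A3 : ℝ × ℝ → ℝ) : ℝ × ℝ → Fin 6 → ℝ := fun p =>
  ![2 * pdy (Lio2 A0 A1 A2 A3) p + 4 * A2 p * Lio2 A0 A1 A2 A3 p
      + 8 * A3 p * Lio1 A0 A1 A2 A3 p,
    -2 * pdy (Lio1 A0 A1 A2 A3) p - 2 * pdx (Lio2 A0 A1 A2 A3) p
      - (4/3) * A1 p * Lio2 A0 A1 A2 A3 p + (4/3) * A2 p * Lio1 A0 A1 A2 A3 p,
    2 * pdx (Lio1 A0 A1 A2 A3) p - 8 * A0 p * Lio2 A0 A1 A2 A3 p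
      - 4 * A1 p * Lio1 A0 A1 A2 A3 p,
    -5 * Lio2 A0 A1 A2 A3 p,
    -5 * Lio1 A0 A1 A2 A3 p,
    0]

/-- The connection matrix `Ω₁`. -/
def Om1 (A0 A1 A2 A3 : ℝ × ℝ → ℝ) : ℝ × ℝ → Matrix (Fin 6) (Fin 6) ℝ := fun p =>
  Matrix.of
  ![![-(2/3) * A1 p, 2 * A0 p, 0, 0, 0, 0],
    ![0, 0, 0, -(1/2 : ℝ), 0, 0],
    ![-2 * A3 p, -(2/3) * A2 p, (4/3) * A1 p, 0, 1, 0],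
    ![-(4/3) * pdx A2 p + 4 * A0 p * A3 p + (2/3) * pdy A1 p,
      -2 * pdy A0 p + (2/3) * pdx A1 p + 4 * A2 p * A0 p - (4/9) * (A1 p) ^ 2,
      2 * pdx A0 p - 4 * A0 p * A1 p,
      -(1/3) * A1 p, -3 * A0 p, 0],
    ![0, 0, 0, 0, 0, -1],
    ![-(4/3) * pdx (pdy A2) p - (20/3) * A0 p * A2 p * A3 p + (2/3) * pdy (pdy A1) p
        + 4 * A3 p * pdy A0 p - 2 * A0 p * pdy A3 p - (16/9) * A2 p * pdx A2 p
        + (8/9) * A2 p * pdy A1 p,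
      (2/3) * pdx (pdy A1) p - (4/3) * A1 p * pdy A1 p + 2 * A0 p * pdy A2 p
        - 2 * pdy (pdy A0) p + 4 * A2 p * pdy A0 p + 4 * A3 p * pdx A0 p
        + 6 * A0 p * pdx A3 p + (8/9) * A1 p * pdx A2 p
        + (4/3) * A0 p * A1 p * A3 p - (4/3) * A0 p * (A2 p) ^ 2,
      2 * pdx (pdy A0) p + (2/3) * A0 p * pdx A2 p - (4/3) * A2 p * pdx A0 p
        - 4 * A1 p * pdy A0 p - (4/3) * A0 p * pdy A1 p
        + (8/3) * A0 p * A1 p * A2 p + 4 * A3 p * (A0 p) ^ 2,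
      (4/3) * pdx A2 p - pdy A1 p + 5 * A0 p * A3 p,
      (1/3) * pdx A1 p - 4 * pdy A0 p + 3 * A2 p * A0 p - (2/9) * (A1 p) ^ 2,
      -(1/3) * A1 p]]

/-- The connection matrix `Ω₂`. -/
def Om2 (A0 A1 A2 A3 : ℝ × ℝ → ℝ) : ℝ × ℝ → Matrix (Fin 6) (Fin 6) ℝ := fun p =>
  Matrix.of
  ![![-(4/3) * A2 p, (2/3) * A1 p, 2 * A0 p, 1, 0, 0],
    ![0, 0, 0, 0, -(1/2 : ℝ), 0],
    ![0, -2 * A3 p, (2/3) * A2 p, 0, 0, 0],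
    ![0, 0, 0, 0, 0, -1],
    ![-2 * pdy A3 p - 4 * A3 p * A2 p,
      2 * pdx A3 p - (2/3) * pdy A2 p + 4 * A1 p * A3 p - (4/9) * (A2 p) ^ 2,
      (4/3) * pdy A1 p - (2/3) * pdx A2 p + 4 * A0 p * A3 p,
      3 * A3 p, (1/3) * A2 p, 0],
    ![-2 * pdx (pdy A3) p - 4 * A2 p * pdx A3 p - (4/3) * A3 p * pdx A2 p
        + (2/3) * A3 p * pdy A1 p - (4/3) * A1 p * pdy A3 p
        - 4 * A0 p * (A3 p) ^ 2 - (8/3) * A1 p * A2 p * A3 p,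
      2 * pdx (pdx A3) p - (4/3) * A2 p * pdx A2 p - (4/3) * A0 p * A2 p * A3 p
        - (2/3) * pdx (pdy A2) p + 4 * A1 p * pdx A3 p + 4 * A0 p * pdy A3 p
        + 6 * A3 p * pdy A0 p + (4/3) * A3 p * (A1 p) ^ 2 + 2 * A3 p * pdx A1 p
        + (8/9) * A2 p * pdy A1 p,
      -(2/3) * pdx (pdx A2) p + (8/9) * A1 p * pdx A2 p + 4 * A0 p * pdx A3 p
        - 2 * A3 p * pdx A0 p - (16/9) * A1 p * pdy A1 p + (4/3) * pdx (pdy A1) p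
        + (20/3) * A0 p * A1 p * A3 p,
      4 * pdx A3 p - (1/3) * pdy A2 p + 3 * A1 p * A3 p - (2/9) * (A2 p) ^ 2,
      pdx A2 p - (4/3) * pdy A1 p + 5 * A0 p * A3 p,
      (1/3) * A2 p]]

/-- `Ω` indexed by a direction. -/
def Om (A0 A1 A2 A3 : ℝ × ℝ → ℝ) : Fin 2 → ℝ × ℝ → Matrix (Fin 6) (Fin 6) ℝ :=
  ![Om1 A0 A1 A2 A3, Om2 A0 A1 A2 A3]

/-- The operator `D_a W = ∂_a W − W·Ω_a` on row-vector-valued functions. -/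
def Dop (A0 A1 A2 A3 : ℝ × ℝ → ℝ) (a : Fin 2) (W : ℝ × ℝ → Fin 6 → ℝ) :
    ℝ × ℝ → Fin 6 → ℝ := fun p =>
  (fun i => pd a (fun q => W q i) p) - Matrix.vecMul (W p) (Om A0 A1 A2 A3 a p)

/-- Iterated derivative `D_{a₁} ⋯ D_{a_j} W` (the head of the list acts last/outermost). -/
def DIter (A0 A1 A2 A3 : ℝ × ℝ → ℝ) (l : List (Fin 2)) (W : ℝ × ℝ → Fin 6 → ℝ) :
    ℝ × ℝ → Fin 6 → ℝ :=
  l.foldr (Dop A0 A1 A2 A3) W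

/-- Symmetrised iterated derivative `D_{(a₁} ⋯ D_{a_j)} V` of the vector `V`. -/
def DSym (A0 A1 A2 A3 : ℝ × ℝ → ℝ) (l : List (Fin 2)) : ℝ × ℝ → Fin 6 → ℝ := fun p =>
  ((l.permutations.length : ℝ))⁻¹ •
    (l.permutations.map (fun m => DIter A0 A1 A2 A3 m (Vrow A0 A1 A2 A3) p)).sum

/-- The `6 × 6` matrix `M([Γ])` with rows `V, D₁V, D₂V, D₁D₁V, (1/2)(D₁D₂V + D₂D₁V), D₂D₂V`. -/
def Mmat (A0 A1 A2 A3 : ℝ × ℝ → ℝ) : ℝ × ℝ → Matrix (Fin 6) (Fin 6) ℝ := fun p =>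
  Matrix.of
  ![Vrow A0 A1 A2 A3 p,
    DIter A0 A1 A2 A3 [0] (Vrow A0 A1 A2 A3) p,
    DIter A0 A1 A2 A3 [1] (Vrow A0 A1 A2 A3) p,
    DIter A0 A1 A2 A3 [0, 0] (Vrow A0 A1 A2 A3) p,
    (1/2 : ℝ) • (DIter A0 A1 A2 A3 [0, 1] (Vrow A0 A1 A2 A3) p
      + DIter A0 A1 A2 A3 [1, 0] (Vrow A0 A1 A2 A3) p),
    DIter A0 A1 A2 A3 [1, 1] (Vrow A0 A1 A2 A3) p]

end

noncomputable section

/-- The matrix `ℱ_K` whose rows are the symmetrised iterated derivatives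
`D_{(a₁}⋯D_{a_j)}V` for `0 ≤ j ≤ K`; the row `(j, k)` is the symmetrised derivative
with `k` of the `j` indices equal to `2` (i.e. `y`-derivatives). -/
def Fmat (A0 A1 A2 A3 : ℝ × ℝ → ℝ) (K : ℕ) :
    ℝ × ℝ → Matrix ((j : Fin (K + 1)) × Fin (j.1 + 1)) (Fin 6) ℝ := fun p =>
  Matrix.of fun jk i =>
    DSym A0 A1 A2 A3
      (List.replicate (jk.2 : ℕ) (1 : Fin 2) ++
        List.replicate ((jk.1 : ℕ) - (jk.2 : ℕ)) (0 : Fin 2)) p i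

/-- `Ψ : U → ℝ⁶` is a (column-vector) solution of the linear system
`∂ₓΨ + Ω₁Ψ = 0`, `∂_yΨ + Ω₂Ψ = 0` on `U`. -/
def IsParallelSection (U : Set (ℝ × ℝ)) (A0 A1 A2 A3 : ℝ × ℝ → ℝ)
    (Ψ : ℝ × ℝ → Fin 6 → ℝ) : Prop :=
  (∀ i : Fin 6, DifferentiableOn ℝ (fun q => Ψ q i) U) ∧
  ∀ p ∈ U,
    (fun i => pdx (fun q => Ψ q i) p) + (Om1 A0 A1 A2 A3 p).mulVec (Ψ p) = 0 ∧
    (fun i => pdy (fun q => Ψ q i) p) + (Om2 A0 A1 A2 A3 p).mulVec (Ψ p) = 0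

end

open Set Filter Topology Module

section Calculus

variable {X F : Type*} [NormedAddCommGroup X] [NormedSpace ℝ X]
  [NormedAddCommGroup F] [NormedSpace ℝ F]

lemma norm_sub_sub_fderiv_le_of_lipschitzOnWith {f : X → F} {s : Set X} {C : NNReal}
    (hs : Convex ℝ s) (hf : ∀ x ∈ s, DifferentiableAt ℝ f x)
    (hC : LipschitzOnWith C (fderiv ℝ f) s) {x y : X} (hx : x ∈ s) (hy : y ∈ s) :
    ‖f y - f x - fderiv ℝ f x (y - x)‖ ≤ C * ‖y - x‖ ^ 2 := by
  have hseg : segment ℝ x y ⊆ s := hs.segment_subset hx hy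
  have hbound : ∀ z ∈ segment ℝ x y, ‖fderiv ℝ f z - fderiv ℝ f x‖ ≤ C * ‖y - x‖ :=
    fun z hz ↦ (hC.norm_sub_le (hseg hz) hx).trans <| by
      gcongr
      exact norm_sub_le_of_mem_segment hz
  calc ‖f y - f x - fderiv ℝ f x (y - x)‖ ≤ C * ‖y - x‖ * ‖y - x‖ :=
        (convex_segment x y).norm_image_sub_le_of_norm_fderiv_le'
          (fun z hz ↦ hf z (hseg hz)) hbound (left_mem_segment ℝ x y) (right_mem_segment ℝ x y)
    _ = C * ‖y - x‖ ^ 2 := by ring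

lemma hasFDerivAt_of_forall_norm_sub_le_sq {f : X → F} {f' : X →L[ℝ] F} {x : X} {C : ℝ}
    (h : ∀ᶠ y in 𝓝 x, ‖f y - f x - f' (y - x)‖ ≤ C * ‖y - x‖ ^ 2) : HasFDerivAt f f' x := by
  refine .of_isLittleO <| (Asymptotics.IsBigO.of_bound C <| h.mono fun y hy ↦ by
    rwa [norm_pow, norm_norm]).trans_isLittleO (g := fun y ↦ ‖y - x‖ ^ 2) ?_
  exact Asymptotics.isLittleO_pow_sub_sub x one_lt_two

lemma eq_zero_of_hasDerivWithinAt_clm_apply {a b : ℝ} {A : ℝ → F →L[ℝ] F}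
    (hA : ContinuousOn A (Icc a b)) {u : ℝ → F}
    (hu : ∀ t ∈ Icc a b, HasDerivWithinAt u (A t (u t)) (Icc a b) t) (ha : u a = 0) :
    ∀ t ∈ Icc a b, u t = 0 := by
  obtain ⟨K, hK⟩ := isCompact_Icc.exists_bound_of_continuousOn hA
  refine eq_zero_of_abs_deriv_le_mul_abs_self_of_eq_zero_right (K := K)
    (fun t ht ↦ (hu t ht).continuousWithinAt)
    (fun t ht ↦ (hu t (Ico_subset_Icc_self ht)).mono_of_mem_nhdsWithin (Icc_mem_nhdsGE_of_mem ht))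
    ha fun t ht ↦ ?_
  exact (A t).le_of_opNorm_le (hK t (Ico_subset_Icc_self ht)) (u t)

lemma exists_contDiffOn_leftInverse_sum_smul [FiniteDimensional ℝ F] {κ : Type*} [Fintype κ]
    {n : WithTop ℕ∞} {U : Set X} (hU : IsOpen U) {w : κ → X → F}
    (hw : ∀ j, ContDiffOn ℝ n (w j) U) {p₀ : X} (hp₀ : p₀ ∈ U)
    (hi : LinearIndependent ℝ fun j ↦ w j p₀) :
    ∃ N ⊆ U, IsOpen N ∧ p₀ ∈ N ∧ ∃ φ : X → F →L[ℝ] (κ → ℝ), ContDiffOn ℝ n φ N ∧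
      ∀ p ∈ N, ∀ c : κ → ℝ, φ p (∑ j, c j • w j p) = c := by
  obtain ⟨L, hL⟩ := (Fintype.linearCombination ℝ fun j ↦ w j p₀).exists_leftInverse_of_injective
    (LinearMap.ker_eq_bot.2 hi.fintypeLinearCombination_injective)
  set A : X → (κ → ℝ) →L[ℝ] (κ → ℝ) := fun p ↦
    (L ∘ₗ Fintype.linearCombination ℝ fun j ↦ w j p).toContinuousLinearMap
  have hA₀ : A p₀ = 1 := by ext1 c; exact LinearMap.congr_fun hL c
  have hAsmooth : ContDiffOn ℝ n A U := by
    refine contDiffOn_clm_apply.2 fun c ↦ ?_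
    exact L.toContinuousLinearMap.contDiff.comp_contDiffOn
      (ContDiffOn.sum fun j _ ↦ contDiffOn_const.smul (hw j))
  refine ⟨U ∩ A ⁻¹' {T | IsUnit T}, inter_subset_left,
    hAsmooth.continuousOn.isOpen_inter_preimage hU Units.isOpen, ⟨hp₀, by simp [hA₀]⟩,
    fun p ↦ (Ring.inverse (A p)).comp L.toContinuousLinearMap, ?_, ?_⟩
  · rintro p ⟨hp, u, hu⟩
    have hinv : ContDiffAt ℝ n Ring.inverse (A p) := hu ▸ contDiffAt_ringInverse ℝ u
    exact ((hinv.comp_contDiffWithinAt p (hAsmooth p hp)).mono inter_subset_left).clm_comp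
      contDiffWithinAt_const
  · rintro p ⟨-, hp⟩ c
    exact DFunLike.congr_fun (Ring.inverse_mul_cancel (A p) hp) c

lemma exists_local_frame [FiniteDimensional ℝ F] {ι : Type*} {n : WithTop ℕ∞} {U : Set X}
    (hU : IsOpen U) {W : ι → X → F} (hW : ∀ i, ContDiffOn ℝ n (W i) U) {r : ℕ}
    (hr : ∀ p ∈ U, finrank ℝ (Submodule.span ℝ (range fun i ↦ W i p)) = r)
    {p₀ : X} (hp₀ : p₀ ∈ U) :
    ∃ s : Fin r → ι, ∃ N ⊆ U, IsOpen N ∧ p₀ ∈ N ∧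
      ∀ Y : X → F, ContDiffOn ℝ n Y N →
        (∀ p ∈ N, Y p ∈ Submodule.span ℝ (range fun i ↦ W i p)) →
        ∃ c : X → Fin r → ℝ, ContDiffOn ℝ n c N ∧ ∀ p ∈ N, Y p = ∑ j, c p j • W (s j) p := by
  obtain ⟨v, hv, -, hvi⟩ := Submodule.exists_fun_fin_finrank_span_eq ℝ (range fun i ↦ W i p₀)
  obtain rfl := hr p₀ hp₀
  choose s hs using hv
  simp only [← funext hs] at hvi
  obtain ⟨N, hNU, hN, hpN, φ, hφ, hφ_left⟩ :=
    exists_contDiffOn_leftInverse_sum_smul hU (fun j ↦ hW (s j)) hp₀ hvi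
  refine ⟨s, N, hNU, hN, hpN, fun Y hY hYmem ↦ ⟨fun p ↦ φ p (Y p), hφ.clm_apply hY, ?_⟩⟩
  intro p hp
  have hindep : LinearIndependent ℝ fun j ↦ W (s j) p :=
    linearIndependent_iff_injective_fintypeLinearCombination.2
      (Function.LeftInverse.injective (g := φ p) (hφ_left p hp))
  have hspan : Submodule.span ℝ (range fun j ↦ W (s j) p)
      = Submodule.span ℝ (range fun i ↦ W i p) := by
    refine Submodule.eq_of_le_of_finrank_eq
      (Submodule.span_mono <| range_comp_subset_range s fun i ↦ W i p) ?_
    rw [finrank_span_eq_card hindep, Fintype.card_fin, hr p (hNU hp)]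
  obtain ⟨c, hc⟩ := (Submodule.mem_span_range_iff_exists_fun ℝ).1 (hspan ▸ hYmem p hp)
  simp only [← hc, hφ_left p hp]

end Calculus

/-! ### Connections and parallel transport -/

/-- Connection forms on the trivial bundle over `X` with fibre `E`. The sign is chosen so that
parallel sections are the solutions of `dΨ = ω Ψ`. -/
abbrev ConnectionForm (X E : Type*) [NormedAddCommGroup X] [NormedSpace ℝ X]
    [NormedAddCommGroup E] [NormedSpace ℝ E] : Type _ := X → X →L[ℝ] E →L[ℝ] E

namespace ConnectionForm

variable {X E : Type*} [NormedAddCommGroup X] [NormedSpace ℝ X]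
  [NormedAddCommGroup E] [NormedSpace ℝ E]

/-- The curvature `dω - ω ∧ ω` of a connection form, evaluated on the tangent vectors `k`, `l`. -/
noncomputable def curvature (ω : ConnectionForm X E) (x k l : X) : E →L[ℝ] E :=
  fderiv ℝ ω x k l - fderiv ℝ ω x l k + ω x l ∘L ω x k - ω x k ∘L ω x l

lemma curvature_apply (ω : ConnectionForm X E) (x k l : X) (v : E) :
    ω.curvature x k l v = fderiv ℝ ω x k l v - fderiv ℝ ω x l k v
      + ω x l (ω x k v) - ω x k (ω x l v) := rfl

/-- The sections which are parallel for `ω` at every point of `S`. -/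
def parallelSections (ω : ConnectionForm X E) (S : Set X) : Submodule ℝ (X → E) where
  carrier := {Ψ | ∀ q ∈ S, HasFDerivAt Ψ ((ω q).flip (Ψ q)) q}
  add_mem' hΨ hΦ q hq := by simpa using (hΨ q hq).add (hΦ q hq)
  zero_mem' q _ := by simpa using hasFDerivAt_zero q
  smul_mem' c Ψ hΨ q hq := by simpa using (hΨ q hq).const_smul c

/-- `g` is parallel for `ω` along the segment `t ↦ p + t • k`, `0 ≤ t ≤ 1`. -/
def IsTransport (ω : ConnectionForm X E) (p k : X) (g : ℝ → E) : Prop :=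
  ∀ t ∈ Icc (0 : ℝ) 1, HasDerivWithinAt g (ω (p + t • k) k (g t)) (Icc 0 1) t

variable {ω : ConnectionForm X E} {S U : Set X} {Ψ : X → E} {p k : X} {g : ℝ → E}

lemma mem_parallelSections :
    Ψ ∈ ω.parallelSections S ↔ ∀ q ∈ S, HasFDerivAt Ψ ((ω q).flip (Ψ q)) q := Iff.rfl

lemma parallelSections_anti {T : Set X} (h : S ⊆ T) :
    ω.parallelSections T ≤ ω.parallelSections S := fun _ hΨ q hq ↦ hΨ q (h hq)

lemma continuousOn_of_mem_parallelSections (hΨ : Ψ ∈ ω.parallelSections S) : ContinuousOn Ψ S :=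
  fun q hq ↦ (hΨ q hq).continuousAt.continuousWithinAt

lemma hasDerivAt_add_smul (p k : X) (t : ℝ) : HasDerivAt (fun t : ℝ ↦ p + t • k) k t := by
  simpa using ((hasDerivAt_id t).smul_const k).const_add p

lemma isTransport_of_mem_parallelSections (hΨ : Ψ ∈ ω.parallelSections S)
    (hseg : ∀ t ∈ Icc (0 : ℝ) 1, p + t • k ∈ S) :
    ω.IsTransport p k fun t ↦ Ψ (p + t • k) := fun t ht ↦
  (HasFDerivAt.comp_hasDerivAt (f := fun t : ℝ ↦ p + t • k) t (hΨ _ (hseg t ht))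
    (hasDerivAt_add_smul p k t)).hasDerivWithinAt

namespace IsTransport

lemma continuousOn (hg : ω.IsTransport p k g) : ContinuousOn g (Icc 0 1) :=
  fun t ht ↦ (hg t ht).continuousWithinAt

lemma hasDerivWithinAt_Ici (hg : ω.IsTransport p k g) {t : ℝ} (ht : t ∈ Ico (0 : ℝ) 1) :
    HasDerivWithinAt g (ω (p + t • k) k (g t)) (Ici t) t :=
  (hg t (Ico_subset_Icc_self ht)).mono_of_mem_nhdsWithin (Icc_mem_nhdsGE_of_mem ht)

lemma eq_zero (hg : ω.IsTransport p k g) (hω : ContinuousOn ω S)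
    (hseg : ∀ t ∈ Icc (0 : ℝ) 1, p + t • k ∈ S) (h0 : g 0 = 0) : ∀ t ∈ Icc (0 : ℝ) 1, g t = 0 :=
  eq_zero_of_hasDerivWithinAt_clm_apply
    ((hω.comp (by fun_prop) hseg).clm_apply continuousOn_const) hg h0

lemma apply_eq_of_direction_eq_zero (hg : ω.IsTransport p 0 g) : g 1 = g 0 :=
  constant_of_has_deriv_right_zero hg.continuousOn
    (fun t ht ↦ by simpa using hg.hasDerivWithinAt_Ici ht) 1 (right_mem_Icc.2 zero_le_one)

end IsTransport

lemma eqOn_zero_of_convex (hS : Convex ℝ S) (hω : ContinuousOn ω S)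
    (hΨ : Ψ ∈ ω.parallelSections S) (hp : p ∈ S) (h0 : Ψ p = 0) : EqOn Ψ 0 S := by
  intro q hq
  have hseg : ∀ t ∈ Icc (0 : ℝ) 1, p + t • (q - p) ∈ S := fun t ht ↦ hS.add_smul_sub_mem hp hq ht
  simpa using (isTransport_of_mem_parallelSections hΨ hseg).eq_zero hω hseg (by simpa using h0) 1
    (right_mem_Icc.2 zero_le_one)

lemma eventually_eq_zero (hU : IsOpen U) (hω : ContinuousOn ω U)
    (hΨ : Ψ ∈ ω.parallelSections U) (hp : p ∈ U) (h0 : Ψ p = 0) : ∀ᶠ q in 𝓝 p, Ψ q = 0 := by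
  obtain ⟨ε, hε, hεU⟩ := Metric.isOpen_iff.1 hU p hp
  filter_upwards [Metric.ball_mem_nhds p hε]
  exact eqOn_zero_of_convex (convex_ball p ε) (hω.mono hεU) (parallelSections_anti hεU hΨ)
    (Metric.mem_ball_self hε) h0

lemma eqOn_zero_of_isPreconnected (hU : IsOpen U) (hUc : IsPreconnected U)
    (hω : ContinuousOn ω U) (hΨ : Ψ ∈ ω.parallelSections U) (hp : p ∈ U) (h0 : Ψ p = 0) :
    EqOn Ψ 0 U := by
  have hne : IsOpen (U ∩ Ψ ⁻¹' {0}ᶜ) :=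
    (continuousOn_of_mem_parallelSections hΨ).isOpen_inter_preimage hU isOpen_compl_singleton
  have hcover : U ⊆ {q | ∀ᶠ y in 𝓝 q, Ψ y = 0} ∪ U ∩ Ψ ⁻¹' {0}ᶜ := fun q hq ↦
    (em (Ψ q = 0)).imp (eventually_eq_zero hU hω hΨ hq) fun h ↦ ⟨hq, h⟩
  have hdisj : Disjoint {q | ∀ᶠ y in 𝓝 q, Ψ y = 0} (U ∩ Ψ ⁻¹' {0}ᶜ) :=
    disjoint_left.2 fun q hq hq' ↦ hq'.2 hq.self_of_nhds
  have hsub := hUc.subset_left_of_subset_union isOpen_setOfPred_eventually_nhds hne hdisj hcover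
    ⟨p, hp, eventually_eq_zero hU hω hΨ hp h0⟩
  exact fun q hq ↦ (hsub hq).self_of_nhds

lemma curvature_apply_eq_zero (hU : IsOpen U) (hω : DifferentiableOn ℝ ω U)
    (hΨ : Ψ ∈ ω.parallelSections U) (hp : p ∈ U) (k l : X) : ω.curvature p k l (Ψ p) = 0 := by
  have hωp : HasFDerivAt ω (fderiv ℝ ω p) p := (hω.differentiableAt (hU.mem_nhds hp)).hasFDerivAt
  have heval := (ContinuousLinearMap.apply ℝ E (E := E)).hasFDerivAt.comp p (hΨ p hp)
  have hsymm : fderiv ℝ ω p k l (Ψ p) + ω p l (ω p k (Ψ p))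
      = fderiv ℝ ω p l k (Ψ p) + ω p k (ω p l (Ψ p)) := by
    simpa using second_derivative_symmetric_of_eventually
      (eventually_of_mem (hU.mem_nhds hp) hΨ) (heval.clm_comp hωp) k l
  rw [curvature_apply, ← sub_eq_zero.2 hsymm]
  abel

end ConnectionForm

section HasC2BoundOn

variable {X F : Type*} [NormedAddCommGroup X] [NormedSpace ℝ X]
  [NormedAddCommGroup F] [NormedSpace ℝ F]

/-- `f` is differentiable at the points of `s`, and `M` bounds `f` on `s` and is a Lipschitz
constant there of both `f` and its derivative. -/
structure HasC2BoundOn (f : X → F) (s : Set X) (M : NNReal) : Prop where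
  differentiableAt : ∀ x ∈ s, DifferentiableAt ℝ f x
  norm_le : ∀ x ∈ s, ‖f x‖ ≤ M
  lipschitzOnWith : LipschitzOnWith M f s
  lipschitzOnWith_fderiv : LipschitzOnWith M (fderiv ℝ f) s

lemma HasC2BoundOn.mono {f : X → F} {s t : Set X} {M : NNReal} (h : HasC2BoundOn f s M)
    (hts : t ⊆ s) : HasC2BoundOn f t M where
  differentiableAt x hx := h.differentiableAt x (hts hx)
  norm_le x hx := h.norm_le x (hts hx)
  lipschitzOnWith := h.lipschitzOnWith.mono hts
  lipschitzOnWith_fderiv := h.lipschitzOnWith_fderiv.mono hts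

lemma exists_hasC2BoundOn_ball {f : X → F} {x : X} (hf : ContDiffAt ℝ 2 f x) :
    ∃ M : NNReal, ∃ ε > 0, HasC2BoundOn f (Metric.ball x ε) M := by
  obtain ⟨K₁, s₁, hs₁, hK₁⟩ := (hf.of_le one_le_two).exists_lipschitzOnWith
  obtain ⟨K₂, s₂, hs₂, hK₂⟩ :=
    (hf.fderiv_right (m := 1) (by norm_num)).exists_lipschitzOnWith
  have hdiff : ∀ᶠ y in 𝓝 x, DifferentiableAt ℝ f y :=
    ((hf.of_le one_le_two).eventually (by simp)).mono fun y hy ↦ hy.differentiableAt one_ne_zero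
  have hnorm : ∀ᶠ y in 𝓝 x, ‖f y‖ < ‖f x‖ + 1 :=
    hf.continuousAt.norm.eventually_lt_const (lt_add_one _)
  obtain ⟨ε, hε, hball⟩ := Metric.eventually_nhds_iff_ball.1
    (hdiff.and <| hnorm.and <| (eventually_mem_set.2 hs₁).and hs₂)
  refine ⟨max (max K₁ K₂) (‖f x‖₊ + 1), ε, hε, fun y hy ↦ (hball y hy).1, fun y hy ↦ ?_, ?_, ?_⟩
  · exact (hball y hy).2.1.le.trans (NNReal.coe_le_coe.2 (le_max_right (max K₁ K₂) (‖f x‖₊ + 1)))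
  · exact (hK₁.mono fun y hy ↦ (hball y hy).2.2.1).weaken (by simp)
  · exact (hK₂.mono fun y hy ↦ (hball y hy).2.2.2).weaken (by simp)

end HasC2BoundOn

namespace ConnectionForm

variable {X E : Type*} [NormedAddCommGroup X] [NormedSpace ℝ X]
  [NormedAddCommGroup E] [NormedSpace ℝ E] {ω : ConnectionForm X E} {S : Set X} {p k : X}

lemma exists_isTransport [CompleteSpace E] {M : ℝ} (hω : ContinuousOn ω S)
    (hM : ∀ x ∈ S, ‖ω x‖ ≤ M) (hseg : ∀ t ∈ Icc (0 : ℝ) 1, p + t • k ∈ S)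
    (hk : M * ‖k‖ ≤ 1 / 2) (v : E) : ∃ g, g 0 = v ∧ ω.IsTransport p k g := by
  have hbound : ∀ t ∈ Icc (0 : ℝ) 1, ‖ω (p + t • k) k‖ ≤ 1 / 2 := fun t ht ↦
    ((ω _).le_of_opNorm_le (hM _ (hseg t ht)) k).trans hk
  have hPL : IsPicardLindelof (fun t x ↦ ω (p + t • k) k x) (⟨0, by simp⟩ : Icc (0 : ℝ) 1) v
      ‖v‖₊ 0 ‖v‖₊ 1 := by
    refine ⟨fun t ht ↦ ?_, fun x _ ↦ ?_, fun t ht x hx ↦ ?_, by simp⟩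
    · exact ((ω _ k).lipschitz.weaken ((hbound t ht).trans (by norm_num))).lipschitzOnWith
    · exact ((hω.comp (by fun_prop) hseg).clm_apply continuousOn_const).clm_apply continuousOn_const
    · have hx2 : ‖x‖ ≤ 2 * ‖v‖ := by
        have := norm_le_norm_add_norm_sub' x v
        rw [mem_closedBall_iff_norm, coe_nnnorm] at hx
        linarith
      calc ‖ω (p + t • k) k x‖ ≤ 1 / 2 * ‖x‖ := (ω _ k).le_of_opNorm_le (hbound t ht) x
        _ ≤ ‖v‖ := by linarith
  exact hPL.exists_eq_forall_mem_Icc_hasDerivWithinAt₀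

/-- With `u` the value at time `t` of a transport in direction `k`, the sum `u + t • ω x h u` is the
first order approximation of the transport in direction `k + h`. The bound measures how far it is
from solving the equation of the latter; flatness at `u` exchanges `k` and `h` in `fderiv ℝ ω x`. -/
lemma norm_approx_transport_sub_le {M : NNReal} (hS : Convex ℝ S) (hω : HasC2BoundOn ω S M)
    {x y h : X} (hx : x ∈ S) (hy : y ∈ S) {t : ℝ} (ht : ‖t‖ ≤ 1) (hxy : y - x = t • h)
    (hk : ‖k‖ ≤ 1) (hkh : ‖k + h‖ ≤ 1) {u : E} (hu : ω.curvature x k h u = 0) :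
    ‖ω x k u + (ω x h u + t • (fderiv ℝ ω x k h u + ω x h (ω x k u)))
        - ω y (k + h) (u + t • ω x h u)‖ ≤ 2 * (M + M ^ 2) * ‖u‖ * ‖h‖ ^ 2 := by
  have hth : ‖t • h‖ ≤ ‖h‖ := by
    rw [norm_smul]
    exact mul_le_of_le_one_left (norm_nonneg h) ht
  have hflat : fderiv ℝ ω x k h u + ω x h (ω x k u) = fderiv ℝ ω x h k u + ω x k (ω x h u) := by
    rw [← sub_eq_zero, ← hu, curvature_apply]
    abel
  have hdecomp : ω y (k + h) (u + t • ω x h u)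
      - (ω x k u + (ω x h u + t • (fderiv ℝ ω x k h u + ω x h (ω x k u))))
      = (ω y - ω x - fderiv ℝ ω x (t • h)) k u + (ω y - ω x) h u
        + t • ((ω y - ω x) (k + h) (ω x h u) + ω x h (ω x h u)) := by
    simp only [hflat, map_add, map_smul, sub_apply, add_apply, smul_apply, smul_add, smul_sub]
    abel
  have hval : ‖ω x h u‖ ≤ M * ‖h‖ * ‖u‖ :=
    (ω x h).le_of_opNorm_le ((ω x).le_of_opNorm_le (hω.norm_le x hx) h) u
  have hdiff : ‖ω y - ω x‖ ≤ M * ‖h‖ := by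
    refine (hω.lipschitzOnWith.norm_sub_le hy hx).trans ?_
    rw [hxy]
    gcongr
  have htaylor : ‖ω y - ω x - fderiv ℝ ω x (t • h)‖ ≤ M * ‖h‖ ^ 2 := by
    rw [← hxy]
    refine (norm_sub_sub_fderiv_le_of_lipschitzOnWith hS hω.differentiableAt
      hω.lipschitzOnWith_fderiv hx hy).trans ?_
    rw [hxy]
    gcongr
  rw [norm_sub_rev, hdecomp]
  calc _ ≤ ‖(ω y - ω x - fderiv ℝ ω x (t • h)) k u‖ + ‖(ω y - ω x) h u‖
        + ‖t • ((ω y - ω x) (k + h) (ω x h u) + ω x h (ω x h u))‖ := norm_add₃_le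
    _ ≤ M * ‖h‖ ^ 2 * 1 * ‖u‖ + M * ‖h‖ * ‖h‖ * ‖u‖
        + 1 * (M * ‖h‖ * 1 * (M * ‖h‖ * ‖u‖) + M * ‖h‖ * (M * ‖h‖ * ‖u‖)) := by
      rw [norm_smul]
      gcongr
      · exact (ContinuousLinearMap.le_opNorm₂ _ _ _).trans (by gcongr)
      · exact (ContinuousLinearMap.le_opNorm₂ _ _ _).trans (by gcongr)
      · refine norm_add_le_of_le ?_ ?_
        · exact (ContinuousLinearMap.le_opNorm₂ _ _ _).trans (by gcongr)
        · exact (ContinuousLinearMap.le_opNorm₂ _ _ _).trans (by gcongr; exact hω.norm_le x hx)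
    _ = 2 * (M + M ^ 2) * ‖u‖ * ‖h‖ ^ 2 := by ring

lemma gronwallBound_zero_left (K ε x : ℝ) : gronwallBound 0 K ε x = ε * gronwallBound 0 K 1 x := by
  unfold gronwallBound
  split_ifs <;> ring

lemma IsTransport.hasDerivWithinAt_add_smul {g : ℝ → E} (hg : ω.IsTransport p k g)
    (hω : ∀ t ∈ Icc (0 : ℝ) 1, DifferentiableAt ℝ ω (p + t • k)) (h : X) {t : ℝ}
    (ht : t ∈ Icc (0 : ℝ) 1) :
    HasDerivWithinAt (fun t ↦ g t + t • ω (p + t • k) h (g t))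
      (ω (p + t • k) k (g t) + (ω (p + t • k) h (g t)
        + t • (fderiv ℝ ω (p + t • k) k h (g t) + ω (p + t • k) h (ω (p + t • k) k (g t)))))
      (Icc 0 1) t := by
  have hωt : HasDerivWithinAt (fun t : ℝ ↦ ω (p + t • k)) (fderiv ℝ ω (p + t • k) k) (Icc 0 1) t :=
    (HasFDerivAt.comp_hasDerivAt (l := ω) t (hω t ht).hasFDerivAt
      (hasDerivAt_add_smul p k t)).hasDerivWithinAt
  simpa [add_comm] using (hg t ht).fun_add ((hasDerivWithinAt_id t _).fun_smul
    ((hωt.clm_apply (hasDerivWithinAt_const t _ h)).clm_apply (hg t ht)))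

lemma IsTransport.norm_sub_sub_le {M : NNReal} (hS : Convex ℝ S) (hω : HasC2BoundOn ω S M)
    {h : X} {g g' : ℝ → E} (hg : ω.IsTransport p k g) (hg' : ω.IsTransport p (k + h) g')
    (h0 : g' 0 = g 0) (hseg : ∀ t ∈ Icc (0 : ℝ) 1, p + t • k ∈ S)
    (hseg' : ∀ t ∈ Icc (0 : ℝ) 1, p + t • (k + h) ∈ S) (hk : ‖k‖ ≤ 1) (hkh : ‖k + h‖ ≤ 1)
    (hflat : ∀ t ∈ Icc (0 : ℝ) 1, ω.curvature (p + t • k) k h (g t) = 0) {G : ℝ}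
    (hG : ∀ t ∈ Icc (0 : ℝ) 1, ‖g t‖ ≤ G) :
    ‖g' 1 - g 1 - ω (p + k) h (g 1)‖
      ≤ 2 * (M + M ^ 2) * G * gronwallBound 0 M 1 1 * ‖h‖ ^ 2 := by
  have hlip : ∀ t ∈ Ico (0 : ℝ) 1, LipschitzOnWith M (ω (p + t • (k + h)) (k + h)) univ := by
    refine fun t ht ↦ ((ω _ (k + h)).lipschitz.weaken ?_).lipschitzOnWith
    exact ((ω _).le_of_opNorm_le_of_le (hω.norm_le _ (hseg' t (Ico_subset_Icc_self ht))) hkh).trans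
      (mul_one _).le
  have hf := fun t ht ↦
    hg.hasDerivWithinAt_add_smul (fun t ht ↦ hω.differentiableAt _ (hseg t ht)) (h := h) (t := t) ht
  have hgron := dist_le_of_approx_trajectories_ODE_of_mem (δ := 0) hlip hg'.continuousOn
    (fun t ht ↦ hg'.hasDerivWithinAt_Ici ht) (fun t _ ↦ (dist_self _).le) (fun _ _ ↦ mem_univ _)
    (fun t ht ↦ (hf t ht).continuousWithinAt)
    (fun t ht ↦ (hf t (Ico_subset_Icc_self ht)).mono_of_mem_nhdsWithin (Icc_mem_nhdsGE_of_mem ht))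
    (εg := 2 * (M + M ^ 2) * G * ‖h‖ ^ 2) (fun t ht ↦ ?_) (fun _ _ ↦ mem_univ _)
    (by simp [h0]) 1 (right_mem_Icc.2 zero_le_one)
  · rw [dist_eq_norm, sub_zero, zero_add, gronwallBound_zero_left] at hgron
    simpa [sub_sub, mul_right_comm] using hgron
  · have ht' := Ico_subset_Icc_self ht
    have hM := norm_approx_transport_sub_le hS hω (hseg t ht') (hseg' t ht') (t := t) (h := h)
      (by rw [Real.norm_of_nonneg ht.1]; exact ht.2.le) (by simp [smul_add]) hk hkh (hflat t ht')
    rw [dist_eq_norm]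
    refine hM.trans ?_
    gcongr
    exact hG t ht'

lemma mem_parallelSections_of_radial {M : NNReal} {p₀ : X} {δ : ℝ} (hδ : δ ≤ 1)
    (hω : HasC2BoundOn ω (Metric.ball p₀ δ) M) {v : E} {g : X → ℝ → E}
    (hg0 : ∀ q ∈ Metric.ball p₀ δ, g q 0 = v)
    (hg : ∀ q ∈ Metric.ball p₀ δ, ω.IsTransport p₀ (q - p₀) (g q))
    (hflat : ∀ q ∈ Metric.ball p₀ δ, ∀ t ∈ Icc (0 : ℝ) 1, ∀ h : X,
      ω.curvature (p₀ + t • (q - p₀)) (q - p₀) h (g q t) = 0) :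
    (fun q ↦ g q 1) ∈ ω.parallelSections (Metric.ball p₀ δ) := by
  intro q hq
  have hconv : Convex ℝ (Metric.ball p₀ δ) := convex_ball p₀ δ
  have hp₀ : p₀ ∈ Metric.ball p₀ δ := Metric.mem_ball_self (Metric.pos_of_mem_ball hq)
  have hseg : ∀ y ∈ Metric.ball p₀ δ, ∀ t ∈ Icc (0 : ℝ) 1, p₀ + t • (y - p₀) ∈ Metric.ball p₀ δ :=
    fun y hy t ht ↦ hconv.add_smul_sub_mem hp₀ hy ht
  have hnorm : ∀ y ∈ Metric.ball p₀ δ, ‖y - p₀‖ ≤ 1 := fun y hy ↦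
    (mem_ball_iff_norm.1 hy).le.trans hδ
  obtain ⟨G, hG⟩ := isCompact_Icc.exists_bound_of_continuousOn (hg q hq).continuousOn
  refine hasFDerivAt_of_forall_norm_sub_le_sq
    (eventually_of_mem (Metric.isOpen_ball.mem_nhds hq) fun y hy ↦ ?_)
    (C := 2 * (M + M ^ 2) * G * gronwallBound 0 M 1 1)
  have hy_eq : y - p₀ = q - p₀ + (y - q) := by abel
  have key := (hg q hq).norm_sub_sub_le hconv hω (h := y - q) (hy_eq ▸ hg y hy)
    ((hg0 y hy).trans (hg0 q hq).symm) (hseg q hq) (hy_eq ▸ hseg y hy) (hnorm q hq)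
    (hy_eq ▸ hnorm y hy) (fun t ht ↦ hflat q hq t ht _) hG
  rwa [add_sub_cancel] at key

end ConnectionForm

/-! ### Parallel families of covectors -/

namespace ConnectionForm

section annihilator

variable {X E ι : Type*} [NormedAddCommGroup E] [NormedSpace ℝ E] {W : ι → X → E →L[ℝ] ℝ} {p : X}

/-- The vectors of the fibre over `p` annihilated by all members of the family `W` of sections of
the dual bundle. -/
def annihilator (W : ι → X → E →L[ℝ] ℝ) (p : X) : Submodule ℝ E :=
  ⨅ i, (W i p).ker

lemma mem_annihilator {v : E} : v ∈ annihilator W p ↔ ∀ i, W i p v = 0 := by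
  simp [annihilator]

lemma finrank_annihilator [FiniteDimensional ℝ E] (W : ι → X → E →L[ℝ] ℝ) (p : X) :
    finrank ℝ (annihilator W p)
      = finrank ℝ E - finrank ℝ (Submodule.span ℝ (range fun i ↦ W i p)) := by
  let e : (E →L[ℝ] ℝ) ≃ₗ[ℝ] Dual ℝ E := LinearMap.toContinuousLinearMap.symm
  let S := (Submodule.span ℝ (range fun i ↦ W i p)).map e.toLinearMap
  have hS : annihilator W p = S.dualCoannihilator := by
    ext v
    refine ⟨fun hv ↦ ?_, fun hv ↦ mem_annihilator.2 fun i ↦ ?_⟩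
    · rw [Submodule.mem_dualCoannihilator]
      rintro _ ⟨φ, hφ, rfl⟩
      have hle : Submodule.span ℝ (range fun i ↦ W i p)
          ≤ (ContinuousLinearMap.apply ℝ ℝ v).ker := by
        rw [Submodule.span_le]
        rintro _ ⟨i, rfl⟩
        exact mem_annihilator.1 hv i
      exact hle hφ
    · exact (Submodule.mem_dualCoannihilator _).1 hv _
        (Submodule.mem_map_of_mem (Submodule.subset_span (mem_range_self i)))
  have h := Subspace.finrank_add_finrank_dualCoannihilator_eq S
  rw [← hS, LinearEquiv.finrank_map_eq] at h
  omega

end annihilator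

variable {X E : Type*} [NormedAddCommGroup X] [NormedSpace ℝ X]
  [NormedAddCommGroup E] [NormedSpace ℝ E] {ω : ConnectionForm X E} {U : Set X} {p k : X}

/-- The covariant derivative in the direction `k` of a section of the dual bundle, for the
connection dual to `ω`. -/
noncomputable def covDeriv (ω : ConnectionForm X E) (k : X) (W : X → E →L[ℝ] ℝ) : X → E →L[ℝ] ℝ :=
  fun x ↦ fderiv ℝ W x k + W x ∘L ω x k

lemma contDiffOn_covDeriv {n m : WithTop ℕ∞} (hU : IsOpen U) (hω : ContDiffOn ℝ n ω U)
    {W : X → E →L[ℝ] ℝ} (hW : ContDiffOn ℝ m W U) (hnm : n + 1 ≤ m) (k : X) :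
    ContDiffOn ℝ n (ω.covDeriv k W) U :=
  ((hW.fderiv_of_isOpen hU hnm).clm_apply contDiffOn_const).add
    ((hW.of_le (le_self_add.trans hnm)).clm_comp (hω.clm_apply contDiffOn_const))

lemma exists_ball_isTransport [CompleteSpace E] {p₀ : X} (hω : ContDiffAt ℝ 2 ω p₀) {N : Set X}
    (hN : N ∈ 𝓝 p₀) :
    ∃ M : NNReal, ∃ δ > 0, δ ≤ 1 ∧ Metric.ball p₀ δ ⊆ N ∧ HasC2BoundOn ω (Metric.ball p₀ δ) M ∧
      ∀ v, ∃ g : X → ℝ → E, (∀ q ∈ Metric.ball p₀ δ, g q 0 = v) ∧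
        ∀ q ∈ Metric.ball p₀ δ, ω.IsTransport p₀ (q - p₀) (g q) := by
  obtain ⟨M, ε, hε, hM⟩ := exists_hasC2BoundOn_ball hω
  obtain ⟨ε', hε', hN'⟩ := Metric.mem_nhds_iff.1 hN
  have hsmall : ∀ᶠ δ : ℝ in 𝓝[>] 0, δ ≤ 1 ∧ δ ≤ ε ∧ δ ≤ ε' ∧ M * δ ≤ 1 / 2 := by
    have hlim : Tendsto (fun δ : ℝ ↦ M * δ) (𝓝 0) (𝓝 0) :=
      (continuous_const_mul (M : ℝ)).tendsto' 0 0 (mul_zero _)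
    exact nhdsWithin_le_nhds ((eventually_le_nhds one_pos).and <| (eventually_le_nhds hε).and <|
      (eventually_le_nhds hε').and <| hlim.eventually_le_const (by norm_num))
  obtain ⟨δ, ⟨hδ1, hδε, hδε', hδM⟩, hδ⟩ := (hsmall.and self_mem_nhdsWithin).exists
  have hbound := hM.mono (Metric.ball_subset_ball hδε)
  refine ⟨M, δ, hδ, hδ1, (Metric.ball_subset_ball hδε').trans hN', hbound, fun v ↦ ?_⟩
  have htr : ∀ q ∈ Metric.ball p₀ δ, ∃ g, g 0 = v ∧ ω.IsTransport p₀ (q - p₀) g := by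
    refine fun q hq ↦ exists_isTransport (S := Metric.ball p₀ δ)
      (fun x hx ↦ (hbound.differentiableAt x hx).continuousAt.continuousWithinAt) hbound.norm_le
      (fun t ht ↦ (convex_ball p₀ δ).add_smul_sub_mem (Metric.mem_ball_self hδ) hq ht)
      (le_trans ?_ hδM) v
    gcongr
    exact (mem_ball_iff_norm.1 hq).le
  choose! g hg0 hg using htr
  exact ⟨g, hg0, hg⟩

lemma IsTransport.hasDerivWithinAt_apply {g : ℝ → E} (hg : ω.IsTransport p k g)
    {W : X → E →L[ℝ] ℝ} {t : ℝ} (ht : t ∈ Icc (0 : ℝ) 1)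
    (hW : DifferentiableAt ℝ W (p + t • k)) :
    HasDerivWithinAt (fun t ↦ W (p + t • k) (g t)) (ω.covDeriv k W (p + t • k) (g t))
      (Icc 0 1) t :=
  (HasFDerivAt.comp_hasDerivAt (l := W) t hW.hasFDerivAt
    (hasDerivAt_add_smul p k t)).hasDerivWithinAt.clm_apply (hg t ht)

/-- A family of sections of the dual bundle which spans, at the points of `U`, a subbundle of rank
`r` invariant under covariant differentiation. -/
structure IsParallelFamily {ι : Type*} (ω : ConnectionForm X E) (U : Set X)
    (W : ι → X → E →L[ℝ] ℝ) (r : ℕ) : Prop where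
  contDiffOn : ∀ i, ContDiffOn ℝ 1 (W i) U
  finrank_span : ∀ p ∈ U, finrank ℝ (Submodule.span ℝ (range fun i ↦ W i p)) = r
  covDeriv_mem : ∀ i k, ∀ p ∈ U, ω.covDeriv k (W i) p ∈ Submodule.span ℝ (range fun i ↦ W i p)

namespace IsParallelFamily

variable {ι : Type*} {W : ι → X → E →L[ℝ] ℝ} {r : ℕ} [FiniteDimensional ℝ E]

lemma exists_transport_mem_annihilator (hW : ω.IsParallelFamily U W r) (hU : IsOpen U)
    (hω : ContinuousOn ω U) {p₀ : X} (hp₀ : p₀ ∈ U) :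
    ∃ N ⊆ U, IsOpen N ∧ p₀ ∈ N ∧ ∀ p k : X, (∀ t ∈ Icc (0 : ℝ) 1, p + t • k ∈ N) → ∀ g : ℝ → E,
      ω.IsTransport p k g → g 0 ∈ annihilator W p →
      ∀ t ∈ Icc (0 : ℝ) 1, g t ∈ annihilator W (p + t • k) := by
  obtain ⟨s, N, hNU, hN, hpN, hframe⟩ := exists_local_frame (n := 0) hU
    (fun i ↦ (hW.contDiffOn i).of_le zero_le_one) hW.finrank_span hp₀
  refine ⟨N, hNU, hN, hpN, fun p k hseg g hg hg0 ↦ ?_⟩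
  have hderiv : ∀ j, ContDiffOn ℝ 0 (ω.covDeriv k (W (s j))) N := fun j ↦
    (contDiffOn_covDeriv hU (contDiffOn_zero.2 hω) (hW.contDiffOn (s j)) (zero_add 1).le k).mono hNU
  choose a ha hacov using fun j ↦
    hframe _ (hderiv j) fun p hp ↦ hW.covDeriv_mem (s j) k p (hNU hp)
  have hframe_zero : ∀ t ∈ Icc (0 : ℝ) 1, (fun j ↦ W (s j) (p + t • k) (g t)) = 0 := by
    let A : ℝ → (Fin r → ℝ) →L[ℝ] (Fin r → ℝ) := fun t ↦
      .pi fun j ↦ ∑ i, a j (p + t • k) i • .proj i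
    have hA : ContinuousOn A (Icc 0 1) := by
      refine continuousOn_clm_apply.2 fun c ↦ continuousOn_pi.2 fun j ↦ ?_
      have hcont := (ha j).continuousOn.comp (f := fun t : ℝ ↦ p + t • k) (by fun_prop) hseg
      simpa [A] using continuousOn_finsetSum _ fun i _ ↦
        (continuousOn_pi.1 hcont i).mul continuousOn_const
    refine eq_zero_of_hasDerivWithinAt_clm_apply hA (fun t ht ↦ hasDerivWithinAt_pi.2 fun j ↦ ?_) ?_
    · have hdiff := ((hW.contDiffOn (s j)).differentiableOn one_ne_zero).differentiableAt
        (hU.mem_nhds (hNU (hseg t ht)))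
      refine (hg.hasDerivWithinAt_apply ht hdiff).congr_deriv ?_
      simp [A, hacov j _ (hseg t ht)]
    · ext j
      simpa using mem_annihilator.1 hg0 (s j)
  refine fun t ht ↦ mem_annihilator.2 fun i ↦ ?_
  obtain ⟨c, -, hc⟩ := hframe (W i) (((hW.contDiffOn i).of_le zero_le_one).mono hNU)
    fun p _ ↦ Submodule.subset_span (mem_range_self i)
  have hzero : ∀ j, W (s j) (p + t • k) (g t) = 0 := congrFun (hframe_zero t ht)
  simp [hc _ (hseg t ht), hzero]

lemma exists_ball_parallelSections (hW : ω.IsParallelFamily U W r) (hU : IsOpen U)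
    (hω : ContDiffOn ℝ 2 ω U)
    (hflat : ∀ p ∈ U, ∀ k l, ∀ v ∈ annihilator W p, ω.curvature p k l v = 0) {p₀ : X}
    (hp₀ : p₀ ∈ U) :
    ∃ δ > 0, Metric.ball p₀ δ ⊆ U ∧ ∀ v ∈ annihilator W p₀,
      ∃ Ψ ∈ ω.parallelSections (Metric.ball p₀ δ), Ψ p₀ = v ∧
        ∀ q ∈ Metric.ball p₀ δ, Ψ q ∈ annihilator W q := by
  obtain ⟨N, hNU, hN, hpN, htransport⟩ :=
    hW.exists_transport_mem_annihilator hU hω.continuousOn hp₀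
  obtain ⟨M, δ, hδ, hδ1, hball, hbound, htr⟩ := exists_ball_isTransport
    (hω.contDiffAt (hU.mem_nhds hp₀)) (hN.mem_nhds hpN)
  refine ⟨δ, hδ, hball.trans hNU, fun v hv ↦ ?_⟩
  obtain ⟨g, hg0, hg⟩ := htr v
  have hseg : ∀ q ∈ Metric.ball p₀ δ, ∀ t ∈ Icc (0 : ℝ) 1, p₀ + t • (q - p₀) ∈ N :=
    fun q hq t ht ↦
      hball ((convex_ball p₀ δ).add_smul_sub_mem (Metric.mem_ball_self hδ) hq ht)
  have hann : ∀ q ∈ Metric.ball p₀ δ, ∀ t ∈ Icc (0 : ℝ) 1,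
      g q t ∈ annihilator W (p₀ + t • (q - p₀)) := fun q hq ↦
    htransport p₀ (q - p₀) (hseg q hq) (g q) (hg q hq) (hg0 q hq ▸ hv)
  refine ⟨fun q ↦ g q 1, mem_parallelSections_of_radial hδ1 hbound hg0 hg fun q hq t ht h ↦
    hflat _ (hNU (hseg q hq t ht)) _ _ _ (hann q hq t ht), ?_, fun q hq ↦ ?_⟩
  · have h := hg p₀ (Metric.mem_ball_self hδ)
    rw [sub_self] at h
    exact h.apply_eq_of_direction_eq_zero.trans (hg0 p₀ (Metric.mem_ball_self hδ))
  · simpa using hann q hq 1 (right_mem_Icc.2 zero_le_one)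

lemma exists_ball_parallelFrame (hW : ω.IsParallelFamily U W r) (hU : IsOpen U)
    (hω : ContDiffOn ℝ 2 ω U)
    (hflat : ∀ p ∈ U, ∀ k l, ∀ v ∈ annihilator W p, ω.curvature p k l v = 0) {p₀ : X}
    (hp₀ : p₀ ∈ U) :
    ∃ δ > 0, Metric.ball p₀ δ ⊆ U ∧ ∃ b : Fin (finrank ℝ E - r) → X → E,
      (∀ j, b j ∈ ω.parallelSections (Metric.ball p₀ δ)) ∧ ∀ x ∈ Metric.ball p₀ δ,
        BijOn (fun c : Fin (finrank ℝ E - r) → ℝ ↦ ∑ j, c j • b j x) univ (annihilator W x) := by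
  obtain ⟨δ, hδ, hδU, hex⟩ := hW.exists_ball_parallelSections hU hω hflat hp₀
  have hdim : ∀ x ∈ U, finrank ℝ (annihilator W x) = finrank ℝ E - r := fun x hx ↦ by
    rw [finrank_annihilator, hW.finrank_span x hx]
  let b₀ := finBasisOfFinrankEq ℝ (annihilator W p₀) (hdim p₀ hp₀)
  choose b hb hb₀ hann using fun j ↦ hex (b₀ j) (b₀ j).2
  refine ⟨δ, hδ, hδU, b, hb, fun x hx ↦ ?_⟩
  let L := Fintype.linearCombination ℝ fun j ↦ (⟨b j x, hann j x hx⟩ : annihilator W x)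
  have hL : ∀ c, (L c : E) = ∑ j, c j • b j x := fun c ↦ by
    simp [L, Fintype.linearCombination_apply]
  have hinj : Function.Injective L := by
    refine (injective_iff_map_eq_zero L).2 fun c hc ↦ ?_
    have hcx : (∑ j, c j • b j) x = 0 := by
      simpa [hc] using (hL c).symm
    have hcp₀ := eqOn_zero_of_convex (convex_ball p₀ δ) (hω.continuousOn.mono hδU)
      (sum_mem fun j _ ↦ Submodule.smul_mem _ (c j) (hb j)) hx hcx (Metric.mem_ball_self hδ)
    have hsum : ∑ j, c j • b₀ j = 0 := Subtype.ext (by simpa [hb₀] using hcp₀)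
    exact funext (Fintype.linearIndependent_iff.1 b₀.linearIndependent c hsum)
  have hsurj : Function.Surjective L := (LinearMap.injective_iff_surjective_of_finrank_eq_finrank
    (by rw [hdim x (hδU hx), finrank_fin_fun])).1 hinj
  refine ⟨fun c _ ↦ mem_of_eq_of_mem (hL c).symm (L c).2, fun c _ d _ hcd ↦ hinj (Subtype.ext ?_),
    fun v hv ↦ ?_⟩
  · rw [hL, hL]
    exact hcd
  · obtain ⟨c, hc⟩ := hsurj ⟨v, hv⟩
    exact ⟨c, mem_univ c, (hL c).symm.trans (congrArg Subtype.val hc)⟩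

end IsParallelFamily

end ConnectionForm

/-! ### Sections of local systems over simply connected spaces -/

/-- Multivalued sections over `X` without branching: near each point `i` there is a family
`sec i c`, `c : F`, of sections over `baseSet i` whose values run bijectively through the fibres
`fibre x`, and two such sections coincide on an open set. -/
structure LocalSystem (X F E : Type*) [TopologicalSpace X] where
  baseSet : X → Set X
  fibre : X → Set E
  sec : X → F → X → E
  isOpen_baseSet : ∀ i, IsOpen (baseSet i)
  mem_baseSet : ∀ x, x ∈ baseSet x
  bijOn_sec : ∀ i, ∀ x ∈ baseSet i, BijOn (fun c ↦ sec i c x) univ (fibre x)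
  isOpen_coincidence : ∀ i j c d, IsOpen {x | x ∈ baseSet i ∩ baseSet j ∧ sec i c x = sec j d x}

namespace LocalSystem

variable {X F E : Type*} [TopologicalSpace X] [Nonempty F] (T : LocalSystem X F E)

/-- The parameter of the section over `baseSet j` which agrees at `x` with `T.sec i c`. -/
noncomputable def coordChange (i j x : X) (c : F) : F :=
  Function.invFunOn (fun d ↦ T.sec j d x) univ (T.sec i c x)

variable {T} {i j x : X} {c d : F}

lemma sec_coordChange (hi : x ∈ T.baseSet i) (hj : x ∈ T.baseSet j) :
    T.sec j (T.coordChange i j x c) x = T.sec i c x :=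
  Function.invFunOn_eq ((T.bijOn_sec j x hj).surjOn ((T.bijOn_sec i x hi).mapsTo (mem_univ c)))

lemma coordChange_eq_iff (hi : x ∈ T.baseSet i) (hj : x ∈ T.baseSet j) :
    T.coordChange i j x c = d ↔ T.sec i c x = T.sec j d x := by
  rw [← sec_coordChange hi hj]
  exact ⟨congrArg (T.sec j · x), fun h ↦ (T.bijOn_sec j x hj).injOn (mem_univ _) (mem_univ d) h⟩

variable [TopologicalSpace F] [DiscreteTopology F]

lemma continuousOn_coordChange (i j : X) :
    ContinuousOn (fun q : X × F ↦ T.coordChange i j q.1 q.2)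
      ((T.baseSet i ∩ T.baseSet j) ×ˢ univ) := by
  rintro ⟨x, c⟩ ⟨⟨hi, hj⟩, -⟩
  refine ContinuousAt.continuousWithinAt <|
    (continuousAt_const (y := T.coordChange i j x c)).congr ?_
  filter_upwards [prod_mem_nhds ((T.isOpen_coincidence i j c _).mem_nhds
    ⟨⟨hi, hj⟩, (sec_coordChange hi hj).symm⟩) ((isOpen_discrete {c}).mem_nhds rfl)]
  rintro ⟨y, _⟩ ⟨⟨⟨hyi, hyj⟩, hy⟩, rfl⟩
  exact ((coordChange_eq_iff hyi hyj).2 hy).symm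

variable (T) in
/-- The fibre bundle with discrete fibre `F` whose continuous sections are locally of the form
`T.sec i c`. -/
noncomputable def toFiberBundleCore : FiberBundleCore X X F where
  baseSet := T.baseSet
  isOpen_baseSet := T.isOpen_baseSet
  indexAt := id
  mem_baseSet_at := T.mem_baseSet
  coordChange := T.coordChange
  coordChange_self i x hi c := (coordChange_eq_iff hi hi).2 rfl
  continuousOn_coordChange := continuousOn_coordChange
  coordChange_comp i j k x := by
    rintro ⟨⟨hi, hj⟩, hk⟩ c
    rw [coordChange_eq_iff hj hk, sec_coordChange hi hj, sec_coordChange hi hk]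

variable (T) in
/-- The value in `E` of a point of the total space. -/
def eval (e : Bundle.TotalSpace F T.toFiberBundleCore.Fiber) : E :=
  T.sec e.proj e.snd e.proj

lemma isOpen_setOf_eval_eq (x : X) (c : F) :
    IsOpen {e | e.proj ∈ T.baseSet x ∧ T.eval e = T.sec x c e.proj} := by
  let τ := T.toFiberBundleCore.localTriv x
  convert τ.continuousOn.isOpen_inter_preimage τ.open_source
    (isOpen_univ.prod (isOpen_discrete {c})) using 1
  ext e
  refine and_congr_right fun he ↦ ?_
  have hτ : τ e ∈ (univ ×ˢ {c} : Set (X × F)) ↔ T.coordChange e.proj x e.proj e.snd = c :=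
    and_iff_right (mem_univ e.proj)
  exact (coordChange_eq_iff (T.mem_baseSet _) he).symm.trans hτ.symm

end LocalSystem

lemma LocalSystem.exists_section {X F E : Type*} [TopologicalSpace X] [SimplyConnectedSpace X]
    [LocallyPathConnectedSpace X] (T : LocalSystem X F E) {x₀ : X} {v : E} (hv : v ∈ T.fibre x₀) :
    ∃ Ψ : X → E, Ψ x₀ = v ∧ ∀ x, ∃ c, Ψ =ᶠ[𝓝 x] T.sec x c := by
  let _ : TopologicalSpace F := ⊥
  have : DiscreteTopology F := ⟨rfl⟩
  obtain ⟨c₀, -, hc₀⟩ := (T.bijOn_sec x₀ x₀ (T.mem_baseSet x₀)).surjOn hv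
  have : Nonempty F := ⟨c₀⟩
  have hcov : IsCoveringMap (Bundle.TotalSpace.proj :
      Bundle.TotalSpace F T.toFiberBundleCore.Fiber → X) := FiberBundle.isCoveringMap
  obtain ⟨s, ⟨hs₀, hs⟩, -⟩ := hcov.existsUnique_continuousMap_lifts (ContinuousMap.id X) x₀
    ⟨x₀, c₀⟩ rfl
  have hproj : ∀ x, (s x).proj = x := congrFun hs
  refine ⟨fun x ↦ T.eval (s x), ?_, fun x ↦ ?_⟩
  · change T.eval (s x₀) = v
    rw [hs₀]
    exact hc₀
  · obtain ⟨c, hc⟩ : ∃ c, T.eval (s x) = T.sec x c (s x).proj :=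
      ⟨(s x).snd, by rw [eval]; simp only [hproj]⟩
    have hx : (s x).proj ∈ T.baseSet x := (hproj x).symm ▸ T.mem_baseSet x
    refine ⟨c, ?_⟩
    filter_upwards [((isOpen_setOf_eval_eq x c).preimage s.continuous).mem_nhds ⟨hx, hc⟩] with y hy
    rw [hy.2, hproj]

/-! ### Parallel sections over simply connected domains -/

namespace ConnectionForm

variable {X E : Type*} [NormedAddCommGroup X] [NormedSpace ℝ X]
  [NormedAddCommGroup E] [NormedSpace ℝ E] {ω : ConnectionForm X E} {U : Set X}

lemma eqOn_of_convex {S : Set X} {Φ Ψ : X → E} {p : X} (hS : Convex ℝ S) (hω : ContinuousOn ω S)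
    (hΦ : Φ ∈ ω.parallelSections S) (hΨ : Ψ ∈ ω.parallelSections S) (hp : p ∈ S)
    (h : Φ p = Ψ p) : EqOn Φ Ψ S := fun _ hq ↦ sub_eq_zero.1 <|
  eqOn_zero_of_convex hS hω (sub_mem hΦ hΨ) hp (sub_eq_zero.2 h) hq

lemma hasFDerivAt_congr {Φ Ψ : X → E} {q : X} (h : Φ =ᶠ[𝓝 q] Ψ)
    (hΨ : HasFDerivAt Ψ ((ω q).flip (Ψ q)) q) : HasFDerivAt Φ ((ω q).flip (Φ q)) q :=
  h.eq_of_nhds ▸ hΨ.congr_of_eventuallyEq h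

namespace IsParallelFamily

variable {ι : Type*} {W : ι → X → E →L[ℝ] ℝ} {r : ℕ} [FiniteDimensional ℝ E]

lemma exists_localSystem (hW : ω.IsParallelFamily U W r) (hU : IsOpen U) (hω : ContDiffOn ℝ 2 ω U)
    (hflat : ∀ p ∈ U, ∀ k l, ∀ v ∈ annihilator W p, ω.curvature p k l v = 0) :
    ∃ T : LocalSystem U (Fin (finrank ℝ E - r) → ℝ) E,
      (∀ x, T.fibre x = annihilator W (x : X)) ∧ ∀ i c, ∀ x ∈ T.baseSet i, ∃ Ψ : X → E,
        HasFDerivAt Ψ ((ω x).flip (Ψ x)) x ∧ ∀ y : U, T.sec i c y = Ψ y := by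
  choose δ hδ hδU b hb hbij using fun i : U ↦ hW.exists_ball_parallelFrame hU hω hflat i.2
  have hopen : ∀ i : U, IsOpen {x : U | (x : X) ∈ Metric.ball (i : X) (δ i)} := fun i ↦
    Metric.isOpen_ball.preimage continuous_subtype_val
  have hmem : ∀ (i : U) (c : Fin (finrank ℝ E - r) → ℝ),
      ∑ j, c j • b i j ∈ ω.parallelSections (Metric.ball (i : X) (δ i)) :=
    fun i c ↦ sum_mem fun j _ ↦ Submodule.smul_mem _ (c j) (hb i j)
  refine ⟨{
    baseSet := fun i ↦ {x | (x : X) ∈ Metric.ball (i : X) (δ i)}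
    fibre := fun x ↦ annihilator W (x : X)
    sec := fun i c x ↦ (∑ j, c j • b i j) (x : X)
    isOpen_baseSet := hopen
    mem_baseSet := fun x ↦ Metric.mem_ball_self (hδ x)
    bijOn_sec := fun i x hx ↦ by simpa using hbij i x hx
    isOpen_coincidence := fun i j c d ↦ ?_ }, fun x ↦ rfl,
    fun i c x hx ↦ ⟨_, hmem i c x hx, fun y ↦ rfl⟩⟩
  refine isOpen_iff_mem_nhds.2 fun x hx ↦ ?_
  filter_upwards [((hopen i).inter (hopen j)).mem_nhds hx.1] with y hy
  exact ⟨hy, eqOn_of_convex ((convex_ball _ _).inter (convex_ball _ _))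
    (hω.continuousOn.mono (inter_subset_left.trans (hδU i)))
    (parallelSections_anti inter_subset_left (hmem i c))
    (parallelSections_anti inter_subset_right (hmem j d)) hx.1 hx.2 hy⟩

lemma exists_parallelSection (hW : ω.IsParallelFamily U W r) (hU : IsOpen U)
    [SimplyConnectedSpace U] (hω : ContDiffOn ℝ 2 ω U)
    (hflat : ∀ p ∈ U, ∀ k l, ∀ v ∈ annihilator W p, ω.curvature p k l v = 0) {p₀ : X}
    (hp₀ : p₀ ∈ U) {v : E} (hv : v ∈ annihilator W p₀) :
    ∃ Ψ ∈ ω.parallelSections U, Ψ p₀ = v := by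
  have : LocallyPathConnectedSpace U := hU.locallyPathConnectedSpace
  obtain ⟨T, hT, hsec⟩ := hW.exists_localSystem hU hω hflat
  obtain ⟨Φ, hΦ₀, hΦ⟩ := T.exists_section (x₀ := ⟨p₀, hp₀⟩) (v := v) (by simpa [hT] using hv)
  let Ψ := Function.extend ((↑) : U → X) Φ 0
  have hΨ : ∀ x : U, Ψ x = Φ x := Subtype.val_injective.extend_apply Φ 0
  refine ⟨Ψ, fun q hq ↦ ?_, (hΨ ⟨p₀, hp₀⟩).trans hΦ₀⟩
  obtain ⟨c, hc⟩ := hΦ ⟨q, hq⟩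
  obtain ⟨Ψ', hΨ', hsec'⟩ := hsec ⟨q, hq⟩ c ⟨q, hq⟩ (T.mem_baseSet _)
  refine hasFDerivAt_congr ?_ hΨ'
  rw [EventuallyEq, ← map_nhds_subtype_coe_eq_nhds hq (hU.mem_nhds hq), eventually_map]
  filter_upwards [hc] with y hy
  rw [hΨ, hy, hsec']

theorem exists_basis_parallelSections (hW : ω.IsParallelFamily U W r) (hU : IsOpen U)
    [SimplyConnectedSpace U] (hω : ContDiffOn ℝ 2 ω U)
    (hflat : ∀ p ∈ U, ∀ k l, ∀ v ∈ annihilator W p, ω.curvature p k l v = 0) :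
    ∃ b : Fin (finrank ℝ E - r) → X → E, (∀ j, b j ∈ ω.parallelSections U) ∧
      ∀ Ψ ∈ ω.parallelSections U, (∀ p ∈ U, Ψ p ∈ annihilator W p) →
        ∃! c : Fin (finrank ℝ E - r) → ℝ, ∀ p ∈ U, Ψ p = ∑ j, c j • b j p := by
  obtain ⟨p₀, hp₀⟩ : U.Nonempty := nonempty_coe_sort.1 inferInstance
  have hUc : IsPreconnected U := isPreconnected_iff_preconnectedSpace.2 inferInstance
  let b₀ := finBasisOfFinrankEq ℝ (annihilator W p₀)
    (by rw [finrank_annihilator, hW.finrank_span p₀ hp₀])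
  choose b hb hb₀ using fun j ↦ hW.exists_parallelSection hU hω hflat hp₀ (b₀ j).2
  refine ⟨b, hb, fun Ψ hΨ hann ↦ ?_⟩
  let w : annihilator W p₀ := ⟨Ψ p₀, hann p₀ hp₀⟩
  have hiff : ∀ c : Fin (finrank ℝ E - r) → ℝ,
      (∀ p ∈ U, Ψ p = ∑ j, c j • b j p) ↔ c = b₀.equivFun w := fun c ↦ by
    rw [← LinearEquiv.symm_apply_eq, Basis.equivFun_symm_apply]
    refine ⟨fun h ↦ Subtype.ext ?_, fun h ↦ ?_⟩
    · simpa [hb₀] using (h p₀ hp₀).symm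
    · have hΨc : (Ψ - ∑ j, c j • b j) p₀ = 0 := by
        simpa [hb₀, sub_eq_zero, w] using (congrArg Subtype.val h).symm
      have hzero := eqOn_zero_of_isPreconnected hU hUc hω.continuousOn
        (sub_mem hΨ (sum_mem fun j _ ↦ Submodule.smul_mem _ (c j) (hb j))) hp₀ hΨc
      exact fun p hp ↦ by simpa [sub_eq_zero] using hzero hp
  simp only [hiff, existsUnique_eq]

end IsParallelFamily

end ConnectionForm

/-! ### The dual connection and curvature of rank one -/

namespace ConnectionForm

variable {X E : Type*} [NormedAddCommGroup X] [NormedSpace ℝ X]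
  [NormedAddCommGroup E] [NormedSpace ℝ E] {ω : ConnectionForm X E} {U : Set X}
  {W W' : X → E →L[ℝ] ℝ} {p k : X}

lemma covDeriv_apply (ω : ConnectionForm X E) (k : X) (W : X → E →L[ℝ] ℝ) (p : X) (v : E) :
    ω.covDeriv k W p v = fderiv ℝ W p k v + W p (ω p k v) := rfl

lemma covDeriv_congr (h : W =ᶠ[𝓝 p] W') : ω.covDeriv k W p = ω.covDeriv k W' p := by
  simp only [covDeriv, h.fderiv_eq, h.eq_of_nhds]

lemma covDeriv_add (hW : DifferentiableAt ℝ W p) (hW' : DifferentiableAt ℝ W' p) :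
    ω.covDeriv k (W + W') p = ω.covDeriv k W p + ω.covDeriv k W' p := by
  simp only [covDeriv, fderiv_add hW hW', add_apply, Pi.add_apply,
    ContinuousLinearMap.add_comp]
  abel

lemma covDeriv_sub (hW : DifferentiableAt ℝ W p) (hW' : DifferentiableAt ℝ W' p) :
    ω.covDeriv k (W - W') p = ω.covDeriv k W p - ω.covDeriv k W' p := by
  simp only [covDeriv, fderiv_sub hW hW', sub_apply, Pi.sub_apply,
    ContinuousLinearMap.sub_comp]
  abel

lemma covDeriv_smul {f : X → ℝ} (hf : DifferentiableAt ℝ f p) (hW : DifferentiableAt ℝ W p) :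
    ω.covDeriv k (f • W) p = f p • ω.covDeriv k W p + fderiv ℝ f p k • W p := by
  simp only [covDeriv, fderiv_smul hf hW, add_apply, Pi.smul_apply',
    smul_apply, ContinuousLinearMap.smulRight_apply,
    ContinuousLinearMap.smul_comp, smul_add]
  abel

lemma covDeriv_zero : ω.covDeriv k 0 = 0 := by
  ext q : 1
  simp [covDeriv]

lemma covDeriv_const_smul (c : ℝ) : ω.covDeriv k (c • W) = c • ω.covDeriv k W := by
  ext q : 1
  have h := congrFun (fderiv_const_smul_field (𝕜 := ℝ) (f := W) c) q
  simp [covDeriv, h]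

lemma covDeriv_sum {κ : Type*} {s : Finset κ} {F : κ → X → E →L[ℝ] ℝ}
    (hF : ∀ j ∈ s, DifferentiableAt ℝ (F j) p) :
    ω.covDeriv k (∑ j ∈ s, F j) p = ∑ j ∈ s, ω.covDeriv k (F j) p := by
  simp only [covDeriv, fderiv_sum hF, sum_apply, Finset.sum_apply,
    ContinuousLinearMap.finsetSum_comp, Finset.sum_add_distrib]

lemma fderiv_covDeriv_apply (hω : DifferentiableAt ℝ ω p) (hW : ContDiffAt ℝ 2 W p) (k l : X)
    (v : E) : fderiv ℝ (ω.covDeriv l W) p k v = fderiv ℝ (fderiv ℝ W) p k l v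
        + fderiv ℝ W p k (ω p l v) + W p (fderiv ℝ ω p k l v) := by
  have hdW := (hW.fderiv_right (m := 1) (by norm_num)).differentiableAt one_ne_zero
  have h := (hdW.hasFDerivAt.clm_apply (hasFDerivAt_const l p)).add
    ((hW.differentiableAt two_ne_zero).hasFDerivAt.clm_comp
      (hω.hasFDerivAt.clm_apply (hasFDerivAt_const l p)))
  rw [show fderiv ℝ (ω.covDeriv l W) p = _ from h.fderiv]
  simp only [ContinuousLinearMap.comp_zero, zero_add, add_apply, ContinuousLinearMap.flip_apply,
    ContinuousLinearMap.comp_apply, ContinuousLinearMap.compL_apply]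
  abel

lemma covDeriv_covDeriv_sub (hω : DifferentiableAt ℝ ω p) (hW : ContDiffAt ℝ 2 W p) (k l : X) :
    ω.covDeriv k (ω.covDeriv l W) p - ω.covDeriv l (ω.covDeriv k W) p
      = W p ∘L ω.curvature p k l := by
  have hsymm : fderiv ℝ (fderiv ℝ W) p k l = fderiv ℝ (fderiv ℝ W) p l k :=
    (hW.isSymmSndFDerivAt (by simp)).eq k l
  ext v
  simp only [sub_apply, ContinuousLinearMap.comp_apply, covDeriv_apply,
    fderiv_covDeriv_apply hω hW, curvature_apply, map_sub, map_add, hsymm]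
  abel

lemma covDeriv_mem_of_mem_span {s : Set X} {S : Submodule ℝ (E →L[ℝ] ℝ)}
    (h : ∀ k ∈ s, ω.covDeriv k W p ∈ S) (hk : k ∈ Submodule.span ℝ s) :
    ω.covDeriv k W p ∈ S := by
  induction hk using Submodule.span_induction with
  | mem k hk => exact h k hk
  | zero => simp [covDeriv]
  | add k l _ _ hk hl =>
    have hadd : ω.covDeriv (k + l) W p = ω.covDeriv k W p + ω.covDeriv l W p := by
      simp only [covDeriv, map_add, ContinuousLinearMap.comp_add]
      abel
    exact hadd ▸ S.add_mem hk hl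
  | smul a k _ hk =>
    have hsmul : ω.covDeriv (a • k) W p = a • ω.covDeriv k W p := by
      simp [covDeriv]
    exact hsmul ▸ S.smul_mem a hk

lemma covDeriv_apply_eq_zero {Ψ : X → E} (hU : IsOpen U) (hΨ : Ψ ∈ ω.parallelSections U)
    (hW : DifferentiableOn ℝ W U) (h : ∀ q ∈ U, W q (Ψ q) = 0) (hp : p ∈ U) :
    ω.covDeriv k W p (Ψ p) = 0 := by
  have hderiv := (hW.differentiableAt (hU.mem_nhds hp)).hasFDerivAt.clm_apply (hΨ p hp)
  have hzero : HasFDerivAt (fun q ↦ W q (Ψ q)) (0 : X →L[ℝ] ℝ) p :=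
    (hasFDerivAt_const 0 p).congr_of_eventuallyEq (eventually_of_mem (hU.mem_nhds hp) h)
  have := DFunLike.congr_fun (hderiv.unique hzero) k
  simpa [covDeriv_apply, add_comm] using this

lemma IsParallelFamily.covDeriv_mem_span [FiniteDimensional ℝ E] {ι : Type*}
    {F : ι → X → E →L[ℝ] ℝ} {r : ℕ} (hF : ω.IsParallelFamily U F r) (hU : IsOpen U)
    (hW : ContDiffOn ℝ 1 W U)
    (hWF : ∀ q ∈ U, W q ∈ Submodule.span ℝ (range fun i ↦ F i q)) (hp : p ∈ U) :
    ω.covDeriv k W p ∈ Submodule.span ℝ (range fun i ↦ F i p) := by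
  obtain ⟨s, N, hNU, hN, hpN, hframe⟩ := exists_local_frame hU hF.contDiffOn hF.finrank_span hp
  obtain ⟨c, hc, hWc⟩ := hframe W (hW.mono hNU) fun q hq ↦ hWF q (hNU hq)
  have hcj : ∀ j, DifferentiableAt ℝ (fun q ↦ c q j) p := fun j ↦
    differentiableAt_pi.1 ((hc.contDiffAt (hN.mem_nhds hpN)).differentiableAt one_ne_zero) j
  have hFj : ∀ j, DifferentiableAt ℝ (F (s j)) p := fun j ↦
    ((hF.contDiffOn (s j)).contDiffAt (hU.mem_nhds hp)).differentiableAt one_ne_zero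
  have hWp : W =ᶠ[𝓝 p] ∑ j, (fun q ↦ c q j) • F (s j) :=
    eventually_of_mem (hN.mem_nhds hpN) fun q hq ↦ by simp [hWc q hq]
  rw [covDeriv_congr hWp, covDeriv_sum fun j _ ↦ (hcj j).smul (hFj j)]
  refine Submodule.sum_mem _ fun j _ ↦ ?_
  rw [covDeriv_smul (hcj j) (hFj j)]
  exact add_mem (Submodule.smul_mem _ _ (hF.covDeriv_mem _ _ p hp))
    (Submodule.smul_mem _ _ (Submodule.subset_span (mem_range_self _)))

end ConnectionForm

namespace ConnectionForm

variable {X E ι : Type*} [NormedAddCommGroup X] [NormedSpace ℝ X]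
  [NormedAddCommGroup E] [NormedSpace ℝ E] {ω : ConnectionForm X E} {U : Set X}
  {V W W' : X → E →L[ℝ] ℝ} {B : X → X → X → E} {p : X} {e : ι → X}

lemma contDiffOn_covDeriv_top (hU : IsOpen U) (hω : ContDiffOn ℝ (⊤ : ℕ∞) ω U)
    (hW : ContDiffOn ℝ (⊤ : ℕ∞) W U) (k : X) : ContDiffOn ℝ (⊤ : ℕ∞) (ω.covDeriv k W) U :=
  contDiffOn_covDeriv hU hω hW le_rfl k

/-- The iterated covariant derivative `∇_{e a₁} ⋯ ∇_{e a_j} W` for `l = [a₁, …, a_j]`. -/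
noncomputable def iterCovDeriv (ω : ConnectionForm X E) (e : ι → X) (W : X → E →L[ℝ] ℝ)
    (l : List ι) : X → E →L[ℝ] ℝ :=
  l.foldr (fun a ↦ ω.covDeriv (e a)) W

/-- The average of the iterated covariant derivatives `∇_{e a₁} ⋯ ∇_{e a_j} W` over all
permutations of the indices in `l = [a₁, …, a_j]`. -/
noncomputable def symCovDeriv (ω : ConnectionForm X E) (e : ι → X) (W : X → E →L[ℝ] ℝ)
    (l : List ι) : X → E →L[ℝ] ℝ :=
  (l.permutations.length : ℝ)⁻¹ • (l.permutations.map (ω.iterCovDeriv e W)).sum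

/-- The span at `p` of the iterated covariant derivatives of order less than `n`. -/
def jetSpan (ω : ConnectionForm X E) (e : ι → X) (W : X → E →L[ℝ] ℝ) (n : ℕ) (p : X) :
    Submodule ℝ (E →L[ℝ] ℝ) :=
  Submodule.span ℝ (range fun l : {l : List ι // l.length < n} ↦ ω.iterCovDeriv e W l p)

/-- The `C^∞(U)`-module of the sections which on `U` are combinations of iterated covariant
derivatives of order less than `n`. -/
def jetModule (ω : ConnectionForm X E) (U : Set X) (e : ι → X) (W : X → E →L[ℝ] ℝ) (n : ℕ) :
    Submodule ℝ (X → E →L[ℝ] ℝ) :=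
  Submodule.span ℝ {F | ∃ f : X → ℝ, ∃ l : List ι, ContDiffOn ℝ (⊤ : ℕ∞) f U ∧ l.length < n ∧
    EqOn F (f • ω.iterCovDeriv e W l) U}

/-- The curvature of `ω` is on `U` the rank one endomorphism `v ↦ V v • B k l`, and all
data are smooth. -/
structure HasRankOneCurvature (ω : ConnectionForm X E) (U : Set X) (V : X → E →L[ℝ] ℝ)
    (B : X → X → X → E) : Prop where
  isOpen : IsOpen U
  contDiffOn_form : ContDiffOn ℝ (⊤ : ℕ∞) ω U
  contDiffOn_covector : ContDiffOn ℝ (⊤ : ℕ∞) V U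
  contDiffOn_vector : ∀ k l, ContDiffOn ℝ (⊤ : ℕ∞) (fun p ↦ B p k l) U
  curvature_apply_eq : ∀ p ∈ U, ∀ k l v, ω.curvature p k l v = V p v • B p k l

lemma iterCovDeriv_mem_jetSpan {l : List ι} {n : ℕ} (hl : l.length < n) :
    ω.iterCovDeriv e W l p ∈ ω.jetSpan e W n p :=
  Submodule.subset_span ⟨⟨l, hl⟩, rfl⟩

lemma jetSpan_mono {m n : ℕ} (hmn : m ≤ n) : ω.jetSpan e W m p ≤ ω.jetSpan e W n p := by
  rw [jetSpan, Submodule.span_le]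
  rintro _ ⟨⟨l, hl⟩, rfl⟩
  exact iterCovDeriv_mem_jetSpan (hl.trans_le hmn)

lemma smul_iterCovDeriv_mem_jetModule {f : X → ℝ} (hf : ContDiffOn ℝ (⊤ : ℕ∞) f U) {l : List ι}
    {n : ℕ} (hl : l.length < n) : f • ω.iterCovDeriv e W l ∈ ω.jetModule U e W n :=
  Submodule.subset_span ⟨f, l, hf, hl, eqOn_refl ..⟩

lemma apply_mem_jetSpan {F : X → E →L[ℝ] ℝ} {n : ℕ} (hF : F ∈ ω.jetModule U e W n) (hp : p ∈ U) :
    F p ∈ ω.jetSpan e W n p := by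
  induction hF using Submodule.span_induction with
  | mem F hF =>
    obtain ⟨f, l, -, hl, hFl⟩ := hF
    rw [hFl hp]
    exact Submodule.smul_mem _ _ (iterCovDeriv_mem_jetSpan hl)
  | zero => exact zero_mem _
  | add F G _ _ hF hG => exact add_mem hF hG
  | smul a F _ hF => exact Submodule.smul_mem _ a hF

/-- For `n = 0` the module is zero, whereas nonzero functions may vanish on `U`. -/
lemma mem_jetModule_of_eqOn {F G : X → E →L[ℝ] ℝ} {n : ℕ} (hn : 0 < n)
    (hF : F ∈ ω.jetModule U e W n) (h : EqOn G F U) : G ∈ ω.jetModule U e W n := by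
  rw [← sub_add_cancel G F]
  refine add_mem (Submodule.subset_span ⟨0, [], contDiffOn_const, hn, fun q hq ↦ ?_⟩) hF
  simp [h hq]

namespace HasRankOneCurvature

variable (h : ω.HasRankOneCurvature U V B)
include h

lemma contDiffOn_iterCovDeriv (l : List ι) :
    ContDiffOn ℝ (⊤ : ℕ∞) (ω.iterCovDeriv e V l) U := by
  induction l with
  | nil => exact h.contDiffOn_covector
  | cons a l ih => exact contDiffOn_covDeriv_top h.isOpen h.contDiffOn_form ih (e a)

lemma contDiffOn_of_mem_jetModule {F : X → E →L[ℝ] ℝ} {n : ℕ} (hF : F ∈ ω.jetModule U e V n) :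
    ContDiffOn ℝ (⊤ : ℕ∞) F U := by
  induction hF using Submodule.span_induction with
  | mem F hF =>
    obtain ⟨f, l, hf, -, hFl⟩ := hF
    exact (hf.smul (h.contDiffOn_iterCovDeriv l)).congr hFl
  | zero => exact contDiffOn_const
  | add F G _ _ hF hG => exact hF.add hG
  | smul a F _ hF => exact contDiffOn_const.smul hF

lemma covDeriv_mem_jetModule {F : X → E →L[ℝ] ℝ} {n : ℕ} (hF : F ∈ ω.jetModule U e V n) (a : ι) :
    ω.covDeriv (e a) F ∈ ω.jetModule U e V (n + 1) := by
  have hdiff : ∀ {G : X → E →L[ℝ] ℝ}, ContDiffOn ℝ (⊤ : ℕ∞) G U → ∀ q ∈ U,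
      DifferentiableAt ℝ G q := fun hG q hq ↦
    (hG.contDiffAt (h.isOpen.mem_nhds hq)).differentiableAt (by simp)
  induction hF using Submodule.span_induction with
  | mem F hF =>
    obtain ⟨f, l, hf, hl, hFl⟩ := hF
    have hdf : ContDiffOn ℝ (⊤ : ℕ∞) (fun q ↦ fderiv ℝ f q (e a)) U :=
      (hf.fderiv_of_isOpen h.isOpen le_rfl).clm_apply contDiffOn_const
    refine mem_jetModule_of_eqOn n.succ_pos (add_mem
      (smul_iterCovDeriv_mem_jetModule hf (l := a :: l) (Nat.succ_lt_succ hl))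
      (smul_iterCovDeriv_mem_jetModule hdf (hl.trans n.lt_succ_self))) fun q hq ↦ ?_
    rw [covDeriv_congr (eventually_of_mem (h.isOpen.mem_nhds hq) hFl),
      covDeriv_smul ((hf.contDiffAt (h.isOpen.mem_nhds hq)).differentiableAt (by simp))
        (hdiff (h.contDiffOn_iterCovDeriv l) q hq)]
    rfl
  | zero => simp [covDeriv_zero]
  | add F G hF hG ihF ihG =>
    exact mem_jetModule_of_eqOn n.succ_pos (add_mem ihF ihG) fun q hq ↦
      covDeriv_add (hdiff (h.contDiffOn_of_mem_jetModule hF) q hq)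
        (hdiff (h.contDiffOn_of_mem_jetModule hG) q hq)
  | smul c F hF ih =>
    simpa [covDeriv_const_smul] using Submodule.smul_mem _ c ih

lemma commutator_mem_jetModule (a b : ι) (l : List ι) :
    ω.iterCovDeriv e V (a :: b :: l) - ω.iterCovDeriv e V (b :: a :: l)
      ∈ ω.jetModule U e V (l.length + 2) := by
  have hf : ContDiffOn ℝ (⊤ : ℕ∞) (fun q ↦ ω.iterCovDeriv e V l q (B q (e a) (e b))) U :=
    (h.contDiffOn_iterCovDeriv l).clm_apply (h.contDiffOn_vector _ _)
  refine mem_jetModule_of_eqOn (Nat.succ_pos _)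
    (smul_iterCovDeriv_mem_jetModule (l := []) hf (Nat.succ_pos _)) fun q hq ↦ ?_
  have hcomm := covDeriv_covDeriv_sub
    ((h.contDiffOn_form.contDiffAt (h.isOpen.mem_nhds hq)).differentiableAt (by simp))
    (((h.contDiffOn_iterCovDeriv (e := e) l).contDiffAt (h.isOpen.mem_nhds hq)).of_le
      (WithTop.coe_le_coe.2 le_top)) (e a) (e b)
  refine hcomm.trans (ContinuousLinearMap.ext fun v ↦ ?_)
  simp [h.curvature_apply_eq q hq, iterCovDeriv, mul_comm]

lemma iterCovDeriv_sub_mem_of_perm {l₁ l₂ : List ι} (hl : l₁.Perm l₂) :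
    ω.iterCovDeriv e V l₁ - ω.iterCovDeriv e V l₂ ∈ ω.jetModule U e V l₁.length := by
  induction hl with
  | nil => simp
  | cons a _ ih =>
    refine mem_jetModule_of_eqOn (Nat.succ_pos _) (h.covDeriv_mem_jetModule ih a)
      fun q hq ↦ (covDeriv_sub ?_ ?_).symm
    all_goals exact ((h.contDiffOn_iterCovDeriv _).contDiffAt
      (h.isOpen.mem_nhds hq)).differentiableAt (by simp)
  | swap a b l => exact h.commutator_mem_jetModule b a l
  | trans hl₁ _ ih₁ ih₂ =>
    rw [← sub_add_sub_cancel]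
    exact add_mem ih₁ (hl₁.length_eq ▸ ih₂)

lemma symCovDeriv_sub_mem (l : List ι) :
    ω.symCovDeriv e V l - ω.iterCovDeriv e V l ∈ ω.jetModule U e V l.length := by
  have hlen : (l.permutations.length : ℝ) ≠ 0 := by
    simp [List.length_permutations, Nat.factorial_ne_zero]
  have hsub : ω.symCovDeriv e V l - ω.iterCovDeriv e V l = (l.permutations.length : ℝ)⁻¹ •
      (l.permutations.map fun m ↦ ω.iterCovDeriv e V m - ω.iterCovDeriv e V l).sum := by
    have hsum := Multiset.sum_map_sub (m := (l.permutations : Multiset (List ι)))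
      (f := ω.iterCovDeriv e V) (g := fun _ ↦ ω.iterCovDeriv e V l)
    simp only [Multiset.map_coe, Multiset.sum_coe, List.map_const', List.sum_replicate] at hsum
    rw [hsum, smul_sub, ← Nat.cast_smul_eq_nsmul ℝ, inv_smul_smul₀ hlen]
    rfl
  rw [hsub]
  refine Submodule.smul_mem _ _ (list_sum_mem fun F hF ↦ ?_)
  obtain ⟨m, hm, rfl⟩ := List.mem_map.1 hF
  have hperm := List.mem_permutations.1 hm
  exact hperm.length_eq ▸ h.iterCovDeriv_sub_mem_of_perm hperm

end HasRankOneCurvature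

end ConnectionForm

/-! ### Stabilisation of the jet spans -/

namespace ConnectionForm

namespace HasRankOneCurvature

variable {X E ι : Type*} [NormedAddCommGroup X] [NormedSpace ℝ X]
  [NormedAddCommGroup E] [NormedSpace ℝ E] {ω : ConnectionForm X E} {U : Set X}
  {V : X → E →L[ℝ] ℝ} {B : X → X → X → E} {p : X} {e : ι → X} {n r : ℕ}
  (h : ω.HasRankOneCurvature U V B)
include h

lemma span_symCovDeriv {𝓛 : Set (List ι)} (h𝓛 : ∀ l, ∃ l' ∈ 𝓛, l'.Perm l) (hp : p ∈ U) (n : ℕ) :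
    Submodule.span ℝ ((fun l ↦ ω.symCovDeriv e V l p) '' {l ∈ 𝓛 | l.length < n})
      = ω.jetSpan e V n p := by
  have hsym (l : List ι) : ω.symCovDeriv e V l p - ω.iterCovDeriv e V l p
      ∈ ω.jetSpan e V l.length p := apply_mem_jetSpan (h.symCovDeriv_sub_mem l) hp
  refine le_antisymm (Submodule.span_le.2 ?_) ?_
  · rintro _ ⟨l, ⟨-, hl⟩, rfl⟩
    simpa using add_mem (jetSpan_mono hl.le (hsym l)) (iterCovDeriv_mem_jetSpan (e := e) hl)
  induction n with
  | zero => simp [jetSpan]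
  | succ n ih =>
    refine Submodule.span_le.2 ?_
    rintro _ ⟨⟨l, hl⟩, rfl⟩
    obtain ⟨l', hl', hperm⟩ := h𝓛 l
    have hlen : l'.length ≤ n := hperm.length_eq ▸ Nat.lt_succ_iff.1 hl
    have hlower : ω.iterCovDeriv e V l p - ω.symCovDeriv e V l' p ∈ ω.jetSpan e V n p := by
      have hiter := apply_mem_jetSpan (h.iterCovDeriv_sub_mem_of_perm (e := e) hperm) hp
      have hneg := neg_mem (add_mem (hsym l') hiter)
      rw [Pi.sub_apply, sub_add_sub_cancel, neg_sub] at hneg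
      exact jetSpan_mono hlen hneg
    have hmono : {l ∈ 𝓛 | l.length < n} ⊆ {l ∈ 𝓛 | l.length < n + 1} :=
      fun m hm ↦ ⟨hm.1, hm.2.trans n.lt_succ_self⟩
    simpa using add_mem (Submodule.span_mono (image_mono hmono) (ih hlower))
      (Submodule.subset_span ⟨l', ⟨hl', Nat.lt_succ_of_le hlen⟩, rfl⟩)

lemma iterCovDeriv_apply_eq_zero {Ψ : X → E} (hΨ : Ψ ∈ ω.parallelSections U)
    (hB : ∀ p ∈ U, ∃ k l, B p k l ≠ 0) (l : List ι) :
    ∀ p ∈ U, ω.iterCovDeriv e V l p (Ψ p) = 0 := by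
  induction l with
  | nil =>
    intro p hp
    obtain ⟨k, l, hkl⟩ := hB p hp
    have hcurv := curvature_apply_eq_zero h.isOpen (h.contDiffOn_form.differentiableOn (by simp))
      hΨ hp k l
    rw [h.curvature_apply_eq p hp] at hcurv
    exact (smul_eq_zero.1 hcurv).resolve_right hkl
  | cons a l ih =>
    exact fun p hp ↦ covDeriv_apply_eq_zero h.isOpen hΨ
      ((h.contDiffOn_iterCovDeriv l).differentiableOn (by simp)) ih hp

section Stabilisation

variable [FiniteDimensional ℝ E] (he : Submodule.span ℝ (range e) = ⊤)
  (hr : ∀ p ∈ U, finrank ℝ (ω.jetSpan e V n p) = r)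
  (hr' : ∀ p ∈ U, finrank ℝ (ω.jetSpan e V (n + 1) p) = r)
include he hr hr'

lemma isParallelFamily_iterCovDeriv :
    ω.IsParallelFamily U (fun l : {l : List ι // l.length < n} ↦ ω.iterCovDeriv e V l) r where
  contDiffOn l := (h.contDiffOn_iterCovDeriv l.1).of_le (by simp)
  finrank_span := hr
  covDeriv_mem l k p hp := by
    have hsucc : ω.jetSpan e V n p = ω.jetSpan e V (n + 1) p :=
      Submodule.eq_of_le_of_finrank_eq (jetSpan_mono n.le_succ) (by rw [hr p hp, hr' p hp])
    refine covDeriv_mem_of_mem_span (S := ω.jetSpan e V n p) ?_ (he ▸ Submodule.mem_top)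
    rintro _ ⟨a, rfl⟩
    rw [hsucc]
    exact iterCovDeriv_mem_jetSpan (l := a :: l) (Nat.succ_lt_succ l.2)

lemma iterCovDeriv_mem_jetSpan_of_finrank_eq (l : List ι) :
    ∀ p ∈ U, ω.iterCovDeriv e V l p ∈ ω.jetSpan e V n p := by
  induction l with
  | nil =>
    intro p hp
    rw [Submodule.eq_of_le_of_finrank_eq (jetSpan_mono n.le_succ) (by rw [hr p hp, hr' p hp])]
    exact iterCovDeriv_mem_jetSpan n.succ_pos
  | cons a l ih =>
    intro p hp
    exact (h.isParallelFamily_iterCovDeriv he hr hr').covDeriv_mem_span h.isOpen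
      ((h.contDiffOn_iterCovDeriv l).of_le (by simp)) ih hp

theorem finrank_jetSpan_add (k : ℕ) (hp : p ∈ U) :
    finrank ℝ (ω.jetSpan e V (n + k) p) = r := by
  have hle : ω.jetSpan e V (n + k) p ≤ ω.jetSpan e V n p := Submodule.span_le.2 <| by
    rintro _ ⟨l, rfl⟩
    exact h.iterCovDeriv_mem_jetSpan_of_finrank_eq he hr hr' l p hp
  rw [hle.antisymm (jetSpan_mono (n.le_add_right k)), hr p hp]

theorem exists_basis_parallelSections [SimplyConnectedSpace U]
    (hB : ∀ p ∈ U, ∃ k l, B p k l ≠ 0) :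
    ∃ b : Fin (finrank ℝ E - r) → X → E, (∀ j, b j ∈ ω.parallelSections U) ∧
      ∀ Ψ ∈ ω.parallelSections U,
        ∃! c : Fin (finrank ℝ E - r) → ℝ, ∀ p ∈ U, Ψ p = ∑ j, c j • b j p := by
  have hV (p) (hp : p ∈ U) (v : E)
      (hv : v ∈ annihilator (fun l : {l : List ι // l.length < n} ↦ ω.iterCovDeriv e V l) p) :
      V p v = 0 := by
    have hle : ω.jetSpan e V n p ≤ LinearMap.ker (ContinuousLinearMap.apply ℝ ℝ v).toLinearMap :=
      Submodule.span_le.2 <| by rintro _ ⟨l, rfl⟩; exact mem_annihilator.1 hv l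
    exact hle (h.iterCovDeriv_mem_jetSpan_of_finrank_eq he hr hr' [] p hp)
  obtain ⟨b, hb, hbΨ⟩ := (h.isParallelFamily_iterCovDeriv he hr hr').exists_basis_parallelSections
    h.isOpen (h.contDiffOn_form.of_le (WithTop.coe_le_coe.2 le_top)) fun p hp k l v hv ↦ by
      rw [h.curvature_apply_eq p hp, hV p hp v hv, zero_smul]
  refine ⟨b, hb, fun Ψ hΨ ↦ hbΨ Ψ hΨ fun p hp ↦ mem_annihilator.2 fun l ↦ ?_⟩
  exact h.iterCovDeriv_apply_eq_zero hΨ hB l.1 p hp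

end Stabilisation

end HasRankOneCurvature

end ConnectionForm

/-! ### Partial derivatives in the plane -/

section PartialDerivatives

variable {f g : ℝ × ℝ → ℝ} {p : ℝ × ℝ} {a b : Fin 2}

/-- The coordinate vectors of the plane, indexed like the partial derivatives `pd`. -/
def coordVec : Fin 2 → ℝ × ℝ := ![(1, 0), (0, 1)]

lemma span_range_coordVec : Submodule.span ℝ (range coordVec) = ⊤ := by
  refine eq_top_iff.2 fun k _ ↦ ?_
  have hk : k = k.1 • coordVec 0 + k.2 • coordVec 1 := by ext <;> simp [coordVec]
  rw [hk]
  exact add_mem (Submodule.smul_mem _ _ (Submodule.subset_span (mem_range_self 0)))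
    (Submodule.smul_mem _ _ (Submodule.subset_span (mem_range_self 1)))

lemma pdx_eq_pd : pdx = pd 0 := rfl

lemma pdy_eq_pd : pdy = pd 1 := rfl

lemma pd_eq_fderiv (a : Fin 2) (hf : DifferentiableAt ℝ f p) :
    pd a f p = fderiv ℝ f p (coordVec a) := by
  fin_cases a
  · exact (HasFDerivAt.comp_hasDerivAt p.1 (f := fun t ↦ (t, p.2)) hf.hasFDerivAt
      ((hasDerivAt_id p.1).prodMk (hasDerivAt_const _ _))).deriv
  · exact (HasFDerivAt.comp_hasDerivAt p.2 (f := fun t ↦ (p.1, t)) hf.hasFDerivAt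
      ((hasDerivAt_const _ _).prodMk (hasDerivAt_id p.2))).deriv

lemma pd_congr (h : f =ᶠ[𝓝 p] g) : pd a f p = pd a g p := by
  fin_cases a
  · exact EventuallyEq.deriv_eq ((by fun_prop : Continuous fun t : ℝ ↦ (t, p.2)).tendsto p.1 h)
  · exact EventuallyEq.deriv_eq ((by fun_prop : Continuous fun t : ℝ ↦ (p.1, t)).tendsto p.2 h)

lemma pd_const (c : ℝ) : pd a (fun _ ↦ c) p = 0 := by
  simp [pd_eq_fderiv]

lemma pd_add (hf : DifferentiableAt ℝ f p) (hg : DifferentiableAt ℝ g p) :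
    pd a (fun q ↦ f q + g q) p = pd a f p + pd a g p := by
  simp [pd_eq_fderiv, hf, hg, fderiv_fun_add]

lemma pd_sub (hf : DifferentiableAt ℝ f p) (hg : DifferentiableAt ℝ g p) :
    pd a (fun q ↦ f q - g q) p = pd a f p - pd a g p := by
  simp [pd_eq_fderiv, hf, hg, fderiv_fun_sub]

lemma pd_mul (hf : DifferentiableAt ℝ f p) (hg : DifferentiableAt ℝ g p) :
    pd a (fun q ↦ f q * g q) p = f p * pd a g p + pd a f p * g p := by
  simp [pd_eq_fderiv, hf, hg, fderiv_fun_mul, mul_comm]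

lemma pd_sq (hf : DifferentiableAt ℝ f p) : pd a (fun q ↦ f q ^ 2) p = 2 * f p * pd a f p := by
  simp only [pow_two, pd_mul hf hf]
  ring

lemma pd_eventuallyEq_fderiv (hf : ContDiffAt ℝ 1 f p) :
    pd a f =ᶠ[𝓝 p] fun q ↦ fderiv ℝ f q (coordVec a) :=
  (hf.eventually (by simp)).mono fun _ hq ↦ pd_eq_fderiv a (hq.differentiableAt one_ne_zero)

@[fun_prop]
lemma contDiffAt_pd (hf : ContDiffAt ℝ (⊤ : ℕ∞) f p) : ContDiffAt ℝ (⊤ : ℕ∞) (pd a f) p :=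
  ((hf.fderiv_right le_rfl).clm_apply contDiffAt_const).congr_of_eventuallyEq
    (pd_eventuallyEq_fderiv (hf.of_le (by simp)))

@[fun_prop]
lemma differentiableAt_pd (hf : ContDiffAt ℝ (⊤ : ℕ∞) f p) : DifferentiableAt ℝ (pd a f) p :=
  (contDiffAt_pd hf).differentiableAt (by simp)

lemma pd_pd_eq_fderiv_fderiv (hf : ContDiffAt ℝ 2 f p) :
    pd a (pd b f) p = fderiv ℝ (fderiv ℝ f) p (coordVec a) (coordVec b) := by
  have hdf : DifferentiableAt ℝ (fderiv ℝ f) p :=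
    (hf.fderiv_right (m := 1) (by norm_num)).differentiableAt one_ne_zero
  rw [pd_congr (pd_eventuallyEq_fderiv (hf.of_le one_le_two)),
    pd_eq_fderiv a (hdf.clm_apply (differentiableAt_const _)),
    fderiv_clm_apply hdf (differentiableAt_const _)]
  simp

lemma pd_comm (hf : ContDiffAt ℝ 2 f p) : pd a (pd b f) p = pd b (pd a f) p := by
  rw [pd_pd_eq_fderiv_fderiv hf, pd_pd_eq_fderiv_fderiv hf]
  exact (hf.isSymmSndFDerivAt (by simp)).eq _ _

lemma pd_one_pd_zero (hf : ContDiffAt ℝ (⊤ : ℕ∞) f p) :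
    pd 1 (pd 0 f) p = pd 0 (pd 1 f) p :=
  pd_comm (hf.of_le (WithTop.coe_le_coe.2 le_top))

lemma pd_zero_pd_one_pd_zero (hf : ContDiffAt ℝ (⊤ : ℕ∞) f p) :
    pd 0 (pd 1 (pd 0 f)) p = pd 0 (pd 0 (pd 1 f)) p :=
  pd_congr <| ((hf.of_le (m := 2) (WithTop.coe_le_coe.2 le_top)).eventually (by simp)).mono
    fun _ hq ↦ pd_comm hq

end PartialDerivatives

section LiouvilleInvariants

variable {A0 A1 A2 A3 : ℝ × ℝ → ℝ} {p : ℝ × ℝ}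
  (hA0 : ContDiffAt ℝ (⊤ : ℕ∞) A0 p) (hA1 : ContDiffAt ℝ (⊤ : ℕ∞) A1 p)
  (hA2 : ContDiffAt ℝ (⊤ : ℕ∞) A2 p) (hA3 : ContDiffAt ℝ (⊤ : ℕ∞) A3 p)
include hA0 hA1 hA2 hA3

@[fun_prop]
lemma contDiffAt_Lio1 : ContDiffAt ℝ (⊤ : ℕ∞) (Lio1 A0 A1 A2 A3) p := by
  unfold Lio1
  simp only [pdx_eq_pd, pdy_eq_pd]
  fun_prop

@[fun_prop]
lemma contDiffAt_Lio2 : ContDiffAt ℝ (⊤ : ℕ∞) (Lio2 A0 A1 A2 A3) p := by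
  unfold Lio2
  simp only [pdx_eq_pd, pdy_eq_pd]
  fun_prop

lemma contDiffAt_Vrow : ContDiffAt ℝ (⊤ : ℕ∞) (Vrow A0 A1 A2 A3) p := by
  refine contDiffAt_pi.2 fun i ↦ ?_
  fin_cases i <;>
    simp only [Vrow, pdx_eq_pd, pdy_eq_pd, Fin.reduceFinMk, Fin.isValue, Matrix.cons_val] <;>
    fun_prop

lemma contDiffAt_Om1_apply (i j : Fin 6) :
    ContDiffAt ℝ (⊤ : ℕ∞) (fun q ↦ Om1 A0 A1 A2 A3 q i j) p := by
  fin_cases i <;> fin_cases j <;>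
    simp only [Om1, pdx_eq_pd, pdy_eq_pd, Fin.reduceFinMk, Fin.isValue, Matrix.of_apply,
      Matrix.cons_val] <;>
    fun_prop

lemma contDiffAt_Om2_apply (i j : Fin 6) :
    ContDiffAt ℝ (⊤ : ℕ∞) (fun q ↦ Om2 A0 A1 A2 A3 q i j) p := by
  fin_cases i <;> fin_cases j <;>
    simp only [Om2, pdx_eq_pd, pdy_eq_pd, Fin.reduceFinMk, Fin.isValue, Matrix.of_apply,
      Matrix.cons_val] <;>
    fun_prop

lemma contDiffAt_Om_apply (a : Fin 2) (i j : Fin 6) :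
    ContDiffAt ℝ (⊤ : ℕ∞) (fun q ↦ Om A0 A1 A2 A3 a q i j) p := by
  fin_cases a
  · exact contDiffAt_Om1_apply hA0 hA1 hA2 hA3 i j
  · exact contDiffAt_Om2_apply hA0 hA1 hA2 hA3 i j

end LiouvilleInvariants

/-! ### The curvature matrix of the system -/

section CurvatureMatrix

/-- The `dx ∧ dy` coefficient of the curvature `dΩ + Ω ∧ Ω` of `Ω = Ω 0 dx + Ω 1 dy`. -/
noncomputable def curvatureMatrix {n : Type*} [Fintype n] (Ω : Fin 2 → ℝ × ℝ → Matrix n n ℝ)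
    (p : ℝ × ℝ) : Matrix n n ℝ :=
  Matrix.of (fun i j ↦ pd 0 (fun q ↦ Ω 1 q i j) p - pd 1 (fun q ↦ Ω 0 q i j) p)
    + (Ω 0 p * Ω 1 p - Ω 1 p * Ω 0 p)

variable {A0 A1 A2 A3 : ℝ × ℝ → ℝ} {p : ℝ × ℝ}

set_option maxHeartbeats 1000000 in
-- 36 differential polynomial identities, one for each entry
lemma curvatureMatrix_Om
    (hA0 : ContDiffAt ℝ (⊤ : ℕ∞) A0 p) (hA1 : ContDiffAt ℝ (⊤ : ℕ∞) A1 p)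
    (hA2 : ContDiffAt ℝ (⊤ : ℕ∞) A2 p) (hA3 : ContDiffAt ℝ (⊤ : ℕ∞) A3 p) :
    curvatureMatrix (Om A0 A1 A2 A3) p
      = Matrix.vecMulVec (Pi.single 5 1) (Vrow A0 A1 A2 A3 p) := by
  have d0 := hA0.differentiableAt (by simp)
  have d1 := hA1.differentiableAt (by simp)
  have d2 := hA2.differentiableAt (by simp)
  have d3 := hA3.differentiableAt (by simp)
  unfold Vrow Lio1 Lio2
  ext i j
  simp only [curvatureMatrix, Matrix.add_apply, Matrix.sub_apply, Matrix.of_apply,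
    Matrix.mul_apply, Fin.sum_univ_six, Matrix.vecMulVec_apply]
  fin_cases i <;> fin_cases j <;>
    simp only [Om, Om1, Om2, pdx_eq_pd, pdy_eq_pd, Fin.reduceFinMk, Fin.isValue,
      Matrix.of_apply, Matrix.cons_val, Pi.single_apply, Fin.reduceEq, if_true, if_false] <;>
    simp (disch := fun_prop) only [pd_const, pd_add, pd_sub, pd_mul, pd_sq, pd_one_pd_zero,
      pd_zero_pd_one_pd_zero] <;>
    ring

end CurvatureMatrix

/-! ### The system as a connection form -/

namespace ConnectionForm

variable {n : Type*} [Fintype n] {Ω : Fin 2 → ℝ × ℝ → Matrix n n ℝ} {U : Set (ℝ × ℝ)} {p : ℝ × ℝ}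

/-- The connection form `-(Ω 0 dx + Ω 1 dy)`, whose parallel sections are the solutions of the
linear system `∂ₓΨ + Ω 0 Ψ = 0`, `∂_yΨ + Ω 1 Ψ = 0`. -/
noncomputable def ofMatrices (Ω : Fin 2 → ℝ × ℝ → Matrix n n ℝ) :
    ConnectionForm (ℝ × ℝ) (n → ℝ) := fun p ↦
  -((ContinuousLinearMap.fst ℝ ℝ ℝ).smulRight (Ω 0 p).mulVecLin.toContinuousLinearMap +
    (ContinuousLinearMap.snd ℝ ℝ ℝ).smulRight (Ω 1 p).mulVecLin.toContinuousLinearMap)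

lemma ofMatrices_apply (k : ℝ × ℝ) (v : n → ℝ) :
    ofMatrices Ω p k v = -(k.1 • (Ω 0 p).mulVec v + k.2 • (Ω 1 p).mulVec v) := by
  simp [ofMatrices, smul_apply]

lemma ofMatrices_coordVec_apply (a : Fin 2) (v : n → ℝ) :
    ofMatrices Ω p (coordVec a) v = -(Ω a p).mulVec v := by
  fin_cases a <;> simp [ofMatrices_apply, coordVec]

lemma contDiffOn_ofMatrices {N : WithTop ℕ∞}
    (hΩ : ∀ a i j, ContDiffOn ℝ N (fun q ↦ Ω a q i j) U) : ContDiffOn ℝ N (ofMatrices Ω) U := by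
  refine contDiffOn_clm_apply.2 fun k ↦ contDiffOn_clm_apply.2 fun v ↦ contDiffOn_pi.2 fun i ↦ ?_
  simp only [ofMatrices_apply, Pi.neg_apply, Pi.add_apply, Pi.smul_apply, Matrix.mulVec,
    dotProduct]
  have hsum (a : Fin 2) : ContDiffOn ℝ N (fun q ↦ ∑ j, Ω a q i j * v j) U :=
    ContDiffOn.sum fun j _ ↦ (hΩ a i j).mul contDiffOn_const
  exact (((hsum 0).const_smul k.1).add ((hsum 1).const_smul k.2)).neg

lemma differentiableAt_entry_of_ofMatrices (hω : DifferentiableAt ℝ (ofMatrices Ω) p)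
    (a : Fin 2) (i j : n) : DifferentiableAt ℝ (fun q ↦ Ω a q i j) p := by
  classical
  have hentry (q : ℝ × ℝ) : Ω a q i j = -ofMatrices Ω q (coordVec a) (Pi.single j 1) i := by
    simp [ofMatrices_coordVec_apply]
  simp only [hentry]
  exact (differentiableAt_pi.1 ((hω.clm_apply (differentiableAt_const _)).clm_apply
    (differentiableAt_const _)) i).fun_neg

lemma fderiv_ofMatrices_coordVec_apply (hω : DifferentiableAt ℝ (ofMatrices Ω) p) (a b : Fin 2)
    (v : n → ℝ) :
    fderiv ℝ (ofMatrices Ω) p (coordVec a) (coordVec b) v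
      = -(Matrix.of fun i j ↦ pd a (fun q ↦ Ω b q i j) p).mulVec v := by
  have hΩ := differentiableAt_entry_of_ofMatrices hω b
  ext i
  have heval : HasFDerivAt (fun q ↦ ofMatrices Ω q (coordVec b) v i) _ p :=
    hasFDerivAt_pi'.1 ((hω.hasFDerivAt.clm_apply (hasFDerivAt_const (coordVec b) p)).clm_apply
      (hasFDerivAt_const v p)) i
  have hentry : HasFDerivAt (fun q ↦ ofMatrices Ω q (coordVec b) v i)
      (-∑ j, v j • fderiv ℝ (fun q ↦ Ω b q i j) p) p := by
    simp only [ofMatrices_coordVec_apply, Pi.neg_apply, Matrix.mulVec, dotProduct]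
    exact (HasFDerivAt.fun_sum fun j _ ↦ (hΩ i j).hasFDerivAt.mul_const (v j)).fun_neg
  have := DFunLike.congr_fun (heval.unique hentry) (coordVec a)
  simpa [pd_eq_fderiv, hΩ, Matrix.mulVec, dotProduct, mul_comm, smul_apply, sum_apply] using this

lemma curvature_eq_smul_coordVec {E : Type*} [NormedAddCommGroup E] [NormedSpace ℝ E]
    (ω : ConnectionForm (ℝ × ℝ) E) (p k l : ℝ × ℝ) :
    ω.curvature p k l
      = (k.1 * l.2 - k.2 * l.1) • ω.curvature p (coordVec 0) (coordVec 1) := by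
  have hdecomp (k : ℝ × ℝ) : k = k.1 • coordVec 0 + k.2 • coordVec 1 := by
    ext <;> simp [coordVec]
  ext v
  conv_lhs => rw [hdecomp k, hdecomp l]
  simp only [curvature_apply, smul_apply, map_add, map_smul, add_apply]
  module

lemma curvature_ofMatrices_apply (hω : DifferentiableAt ℝ (ofMatrices Ω) p) (k l : ℝ × ℝ)
    (v : n → ℝ) :
    (ofMatrices Ω).curvature p k l v
      = -(k.1 * l.2 - k.2 * l.1) • (curvatureMatrix Ω p).mulVec v := by
  have hcoord : (ofMatrices Ω).curvature p (coordVec 0) (coordVec 1) v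
      = -(curvatureMatrix Ω p).mulVec v := by
    rw [curvature_apply, fderiv_ofMatrices_coordVec_apply hω 0 1,
      fderiv_ofMatrices_coordVec_apply hω 1 0]
    simp only [ofMatrices_coordVec_apply, Matrix.mulVec_neg, Matrix.mulVec_mulVec, curvatureMatrix,
      Matrix.add_mulVec, Matrix.sub_mulVec]
    have hsub : (Matrix.of fun i j ↦ pd 0 (fun q ↦ Ω 1 q i j) p - pd 1 (fun q ↦ Ω 0 q i j) p)
      = (Matrix.of fun i j ↦ pd 0 (fun q ↦ Ω 1 q i j) p)
        - Matrix.of fun i j ↦ pd 1 (fun q ↦ Ω 0 q i j) p := rfl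
    rw [hsub, Matrix.sub_mulVec]
    abel
  rw [curvature_eq_smul_coordVec, smul_apply, hcoord, smul_neg, neg_smul]

end ConnectionForm

lemma fderiv_coordVec {ι : Type*} {W : ℝ × ℝ → ι → ℝ} {p : ℝ × ℝ} (hW : DifferentiableAt ℝ W p)
    (a : Fin 2) :
    fderiv ℝ W p (coordVec a) = fun i ↦ pd a (fun q ↦ W q i) p := by
  ext i
  rw [pd_eq_fderiv a (differentiableAt_pi.1 hW i), fderiv_apply hW]
  rfl

section RowCovector

variable {n : Type*} [Fintype n] {Ω : Fin 2 → ℝ × ℝ → Matrix n n ℝ} {W : ℝ × ℝ → n → ℝ}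
  {U : Set (ℝ × ℝ)} {p : ℝ × ℝ}

/-- Row vectors `w`, regarded as the covectors `v ↦ w ⬝ᵥ v`. -/
noncomputable def rowCovector (n : Type*) [Fintype n] : (n → ℝ) ≃L[ℝ] (n → ℝ) →L[ℝ] ℝ :=
  open scoped Classical in
  ((dotProductEquiv ℝ n).trans LinearMap.toContinuousLinearMap).toContinuousLinearEquiv

lemma rowCovector_apply (w v : n → ℝ) : rowCovector n w v = w ⬝ᵥ v := rfl

lemma hasFDerivAt_ofMatrices_iff :
    HasFDerivAt W ((ConnectionForm.ofMatrices Ω p).flip (W p)) p ↔ DifferentiableAt ℝ W p ∧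
      ∀ a, (fun i ↦ pd a (fun q ↦ W q i) p) + (Ω a p).mulVec (W p) = 0 := by
  constructor
  · intro h
    refine ⟨h.differentiableAt, fun a ↦ ?_⟩
    rw [← fderiv_coordVec h.differentiableAt, h.fderiv, ContinuousLinearMap.flip_apply,
      ConnectionForm.ofMatrices_coordVec_apply, neg_add_cancel]
  · rintro ⟨hW, h⟩
    refine hW.hasFDerivAt.congr_fderiv (ContinuousLinearMap.coe_injective
      (LinearMap.ext_on_range span_range_coordVec fun a ↦ ?_))
    change fderiv ℝ W p (coordVec a) = ConnectionForm.ofMatrices Ω p (coordVec a) (W p)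
    rw [fderiv_coordVec hW, ConnectionForm.ofMatrices_coordVec_apply]
    exact eq_neg_of_add_eq_zero_left (h a)

lemma covDeriv_rowCovector (hW : DifferentiableAt ℝ W p) (a : Fin 2) :
    (ConnectionForm.ofMatrices Ω).covDeriv (coordVec a) (rowCovector n ∘ W) p
      = rowCovector n ((fun i ↦ pd a (fun q ↦ W q i) p) - Matrix.vecMul (W p) (Ω a p)) := by
  ext v
  rw [ConnectionForm.covDeriv_apply, ContinuousLinearEquiv.comp_fderiv,
    ConnectionForm.ofMatrices_coordVec_apply]
  change rowCovector n (fderiv ℝ W p (coordVec a)) v + rowCovector n (W p) _ = _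
  rw [fderiv_coordVec hW, rowCovector_apply, rowCovector_apply, rowCovector_apply,
    dotProduct_neg, sub_dotProduct, Matrix.dotProduct_mulVec, sub_eq_add_neg]

lemma finrank_span_rowCovector_image (s : Set (n → ℝ)) :
    finrank ℝ (Submodule.span ℝ (rowCovector n '' s)) = finrank ℝ (Submodule.span ℝ s) := by
  rw [← (rowCovector n).toLinearEquiv.finrank_map_eq (Submodule.span ℝ s), Submodule.map_span]
  rfl

end RowCovector

/-- The multi-index `∂_y^k ∂ₓ^m` for the pair `(k, m)`, as the list of its indices. -/
def orderedIndices (m : ℕ × ℕ) : List (Fin 2) :=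
  List.replicate m.1 1 ++ List.replicate m.2 0

lemma exists_orderedIndices_perm (l : List (Fin 2)) : ∃ m, (orderedIndices m).Perm l := by
  refine ⟨(l.count 1, l.count 0), List.perm_iff_count.2 fun a ↦ ?_⟩
  fin_cases a <;> simp [orderedIndices, List.count_replicate]

section Liouville

variable {U : Set (ℝ × ℝ)} {A0 A1 A2 A3 : ℝ × ℝ → ℝ}

lemma range_row_Fmat (K : ℕ) (p : ℝ × ℝ) :
    range (Fmat A0 A1 A2 A3 K p).row
      = (fun l ↦ DSym A0 A1 A2 A3 l p) '' {l ∈ range orderedIndices | l.length < K + 1} := by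
  ext w
  constructor
  · rintro ⟨⟨j, k⟩, rfl⟩
    refine ⟨_, ⟨mem_range_self (k.1, j.1 - k.1), ?_⟩, rfl⟩
    simp only [orderedIndices, List.length_append, List.length_replicate]
    lia
  · rintro ⟨_, ⟨⟨⟨k, m⟩, rfl⟩, hlen⟩, rfl⟩
    simp only [orderedIndices, List.length_append, List.length_replicate] at hlen
    refine ⟨⟨⟨k + m, hlen⟩, ⟨k, by simp⟩⟩, ?_⟩
    ext i
    simp [Fmat, orderedIndices]

/-- The connection form of the linear system `∂ₓΨ + Ω₁Ψ = 0`, `∂_yΨ + Ω₂Ψ = 0`. -/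
noncomputable abbrev liouvilleForm (A0 A1 A2 A3 : ℝ × ℝ → ℝ) : ConnectionForm (ℝ × ℝ) (Fin 6 → ℝ) :=
  ConnectionForm.ofMatrices (Om A0 A1 A2 A3)

lemma isParallelSection_iff (hU : IsOpen U) {Ψ : ℝ × ℝ → Fin 6 → ℝ} :
    IsParallelSection U A0 A1 A2 A3 Ψ ↔ Ψ ∈ (liouvilleForm A0 A1 A2 A3).parallelSections U := by
  have hpi : (∀ i, DifferentiableOn ℝ (fun q ↦ Ψ q i) U) ↔ ∀ p ∈ U, DifferentiableAt ℝ Ψ p := by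
    rw [← differentiableOn_pi]
    exact ⟨fun h p hp ↦ h.differentiableAt (hU.mem_nhds hp),
      fun h p hp ↦ (h p hp).differentiableWithinAt⟩
  simp only [ConnectionForm.mem_parallelSections, hasFDerivAt_ofMatrices_iff, IsParallelSection,
    hpi, Fin.forall_fin_two, ← forall_and]
  rfl

variable (hU : IsOpen U)
  (hA0 : ContDiffOn ℝ (⊤ : ℕ∞) A0 U) (hA1 : ContDiffOn ℝ (⊤ : ℕ∞) A1 U)
  (hA2 : ContDiffOn ℝ (⊤ : ℕ∞) A2 U) (hA3 : ContDiffOn ℝ (⊤ : ℕ∞) A3 U)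
include hU hA0 hA1 hA2 hA3

lemma hasRankOneCurvature_liouvilleForm :
    (liouvilleForm A0 A1 A2 A3).HasRankOneCurvature U
      (rowCovector (Fin 6) ∘ Vrow A0 A1 A2 A3)
      (fun _ k l ↦ -(k.1 * l.2 - k.2 * l.1) • Pi.single 5 1) := by
  have hat {f : ℝ × ℝ → ℝ} (hf : ContDiffOn ℝ (⊤ : ℕ∞) f U) {p} (hp : p ∈ U) :
      ContDiffAt ℝ (⊤ : ℕ∞) f p := hf.contDiffAt (hU.mem_nhds hp)
  have hform : ContDiffOn ℝ (⊤ : ℕ∞) (liouvilleForm A0 A1 A2 A3) U :=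
    ConnectionForm.contDiffOn_ofMatrices fun a i j p hp ↦
      (contDiffAt_Om_apply (hat hA0 hp) (hat hA1 hp) (hat hA2 hp) (hat hA3 hp) a i
        j).contDiffWithinAt
  refine ⟨hU, hform, fun p hp ↦ ?_, fun k l ↦ contDiffOn_const, fun p hp k l v ↦ ?_⟩
  · exact ((rowCovector _).contDiff.contDiffAt.comp p (contDiffAt_Vrow (hat hA0 hp) (hat hA1 hp)
      (hat hA2 hp) (hat hA3 hp))).contDiffWithinAt
  · rw [ConnectionForm.curvature_ofMatrices_apply
        ((hform.contDiffAt (hU.mem_nhds hp)).differentiableAt (by simp)),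
      curvatureMatrix_Om (hat hA0 hp) (hat hA1 hp) (hat hA2 hp) (hat hA3 hp),
      Matrix.vecMulVec_mulVec, op_smul_eq_smul, smul_comm]
    rfl

lemma iterCovDeriv_eqOn_DIter (l : List (Fin 2)) :
    EqOn ((liouvilleForm A0 A1 A2 A3).iterCovDeriv coordVec
        (rowCovector (Fin 6) ∘ Vrow A0 A1 A2 A3) l)
      (rowCovector (Fin 6) ∘ DIter A0 A1 A2 A3 l (Vrow A0 A1 A2 A3)) U := by
  have h := hasRankOneCurvature_liouvilleForm hU hA0 hA1 hA2 hA3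
  induction l with
  | nil => exact eqOn_refl _ _
  | cons a l ih =>
    intro p hp
    have hnhds := eventuallyEq_of_mem (hU.mem_nhds hp) ih
    have hdiff : DifferentiableAt ℝ (DIter A0 A1 A2 A3 l (Vrow A0 A1 A2 A3)) p := by
      rw [← (rowCovector (Fin 6)).comp_differentiableAt_iff, ← hnhds.differentiableAt_iff]
      exact ((h.contDiffOn_iterCovDeriv l).contDiffAt (hU.mem_nhds hp)).differentiableAt (by simp)
    exact (ConnectionForm.covDeriv_congr hnhds).trans (covDeriv_rowCovector hdiff a)

lemma symCovDeriv_eqOn_DSym (l : List (Fin 2)) :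
    EqOn ((liouvilleForm A0 A1 A2 A3).symCovDeriv coordVec
        (rowCovector (Fin 6) ∘ Vrow A0 A1 A2 A3) l)
      (rowCovector (Fin 6) ∘ DSym A0 A1 A2 A3 l) U := by
  intro p hp
  simp only [ConnectionForm.symCovDeriv, Function.comp_apply, DSym, map_smul, map_list_sum,
    Pi.smul_apply, Pi.list_sum_apply, List.map_map]
  congr 3
  exact funext fun m ↦ iterCovDeriv_eqOn_DIter hU hA0 hA1 hA2 hA3 m hp

lemma rank_Fmat (K : ℕ) {p : ℝ × ℝ} (hp : p ∈ U) :
    (Fmat A0 A1 A2 A3 K p).rank = finrank ℝ ((liouvilleForm A0 A1 A2 A3).jetSpan coordVec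
      (rowCovector (Fin 6) ∘ Vrow A0 A1 A2 A3) (K + 1) p) := by
  have hperm (l : List (Fin 2)) : ∃ l' ∈ range orderedIndices, l'.Perm l := by
    obtain ⟨m, hm⟩ := exists_orderedIndices_perm l
    exact ⟨_, mem_range_self m, hm⟩
  rw [Matrix.rank_eq_finrank_span_row, range_row_Fmat, ← finrank_span_rowCovector_image,
    image_image, ← (hasRankOneCurvature_liouvilleForm hU hA0 hA1 hA2 hA3).span_symCovDeriv
      hperm hp]
  exact congrArg (fun s ↦ finrank ℝ (Submodule.span ℝ s))
    (image_congr fun l _ ↦ (symCovDeriv_eqOn_DSym hU hA0 hA1 hA2 hA3 l hp).symm)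

end Liouville

theorem frobenius_completeness_general {U : Set (ℝ × ℝ)} (hU : IsOpen U) [SimplyConnectedSpace U]
    {A0 A1 A2 A3 : ℝ × ℝ → ℝ}
    (hA0 : ContDiffOn ℝ (⊤ : ℕ∞) A0 U) (hA1 : ContDiffOn ℝ (⊤ : ℕ∞) A1 U)
    (hA2 : ContDiffOn ℝ (⊤ : ℕ∞) A2 U) (hA3 : ContDiffOn ℝ (⊤ : ℕ∞) A3 U) {r K₀ : ℕ}
    (hr : ∀ p ∈ U, (Fmat A0 A1 A2 A3 K₀ p).rank = r)
    (hr' : ∀ p ∈ U, (Fmat A0 A1 A2 A3 (K₀ + 1) p).rank = r) :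
    (∀ k, ∀ p ∈ U, (Fmat A0 A1 A2 A3 (K₀ + k) p).rank = r) ∧
    ∃ b : Fin (6 - r) → (ℝ × ℝ → Fin 6 → ℝ),
      (∀ m, IsParallelSection U A0 A1 A2 A3 (b m)) ∧
      ∀ Ψ : ℝ × ℝ → Fin 6 → ℝ, IsParallelSection U A0 A1 A2 A3 Ψ →
        ∃! c : Fin (6 - r) → ℝ, ∀ p ∈ U, Ψ p = ∑ m, c m • b m p := by
  have h := hasRankOneCurvature_liouvilleForm hU hA0 hA1 hA2 hA3
  have hrank (K : ℕ) {p : ℝ × ℝ} (hp : p ∈ U) := rank_Fmat hU hA0 hA1 hA2 hA3 K hp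
  have hspan : ∀ p ∈ U, finrank ℝ ((liouvilleForm A0 A1 A2 A3).jetSpan coordVec
      (rowCovector (Fin 6) ∘ Vrow A0 A1 A2 A3) (K₀ + 1) p) = r :=
    fun p hp ↦ (hrank K₀ hp).symm.trans (hr p hp)
  have hspan' : ∀ p ∈ U, finrank ℝ ((liouvilleForm A0 A1 A2 A3).jetSpan coordVec
      (rowCovector (Fin 6) ∘ Vrow A0 A1 A2 A3) (K₀ + 1 + 1) p) = r :=
    fun p hp ↦ (hrank (K₀ + 1) hp).symm.trans (hr' p hp)
  refine ⟨fun k p hp ↦ ?_, ?_⟩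
  · rw [hrank _ hp, add_right_comm]
    exact h.finrank_jetSpan_add span_range_coordVec hspan hspan' k hp
  · have hcurv : ∀ p ∈ U, ∃ k l : ℝ × ℝ,
        -(k.1 * l.2 - k.2 * l.1) • (Pi.single 5 1 : Fin 6 → ℝ) ≠ 0 :=
      fun _ _ ↦ ⟨coordVec 0, coordVec 1, by simp [coordVec]⟩
    have hbasis := h.exists_basis_parallelSections span_range_coordVec hspan hspan' hcurv
    rw [finrank_fin_fun] at hbasis
    simpa only [isParallelSection_iff hU] using hbasis

/-- **Frobenius-type completeness theorem.** If the ranks of the matrices `ℱ_K` are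
constant on `U` and `K₀` is the smallest `K` with `rank ℱ_K = rank ℱ_{K+1}`, then the
ranks stabilise from `K₀` on, and the space of solutions of the linear system
`∂Ψ + ΩΨ = 0` on `U` has dimension `6 − rank ℱ_{K₀}`. -/
theorem frobenius_completeness (U : Set (ℝ × ℝ)) (hU : IsOpen U) (hUconn : IsConnected U)
    (hUsc : SimplyConnectedSpace U)
    (A0 A1 A2 A3 : ℝ × ℝ → ℝ)
    (hA0 : AnalyticOnNhd ℝ A0 U) (hA1 : AnalyticOnNhd ℝ A1 U)
    (hA2 : AnalyticOnNhd ℝ A2 U) (hA3 : AnalyticOnNhd ℝ A3 U)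
    (r : ℕ → ℕ)
    (hconst : ∀ K : ℕ, ∀ p ∈ U, (Fmat A0 A1 A2 A3 K p).rank = r K)
    (K₀ : ℕ)
    (hK₀ : r K₀ = r (K₀ + 1))
    (hmin : ∀ K < K₀, r K ≠ r (K + 1)) :
    (∀ k : ℕ, r (K₀ + k) = r K₀) ∧
    ∃ b : Fin (6 - r K₀) → (ℝ × ℝ → Fin 6 → ℝ),
      (∀ m, IsParallelSection U A0 A1 A2 A3 (b m)) ∧
      (∀ Ψ : ℝ × ℝ → Fin 6 → ℝ, IsParallelSection U A0 A1 A2 A3 Ψ →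
        ∃! c : Fin (6 - r K₀) → ℝ, ∀ p ∈ U, Ψ p = ∑ m, c m • b m p) := by
  obtain ⟨hstab, hsol⟩ := frobenius_completeness_general hU (hA0.contDiffOn hU.uniqueDiffOn)
    (hA1.contDiffOn hU.uniqueDiffOn) (hA2.contDiffOn hU.uniqueDiffOn)
    (hA3.contDiffOn hU.uniqueDiffOn) (hconst K₀) fun p hp ↦ (hconst _ p hp).trans hK₀.symm
  obtain ⟨p, hp⟩ := hUconn.nonempty
  exact ⟨fun k ↦ (hconst _ p hp).symm.trans (hstab k p hp), hsol⟩
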